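/- arXiv:2602.21118 — 3 statements merged into one kernel-verified Lean document; each statement's English description precedes it below -/
import Mathlib

section
/- Let 1<p<∞ and let Ω ⊆ ℝ^N be an open set such that λ_{k,p}^{LS}(Ω) < E_p(Ω) for some k ∈ ℕ\{0}. If E_p(Ω) < +∞, then for every ℓ ∈ {1,…,k} there exist constants C_ℓ = C_ℓ(N,p,Ω) > 0 and α_ℓ = α_ℓ(p,Ω) > 0 such that every eigenfunction u_ℓ ∈ W^{1,p}_0(Ω) associated to the eigenvalue λ_{ℓ,p}^{LS}(Ω) satisfies |u_ℓ(x)| ≤ C_ℓ ‖u_ℓ‖_{L^p(Ω)} e^{−α_ℓ |x|} for every x ∈ Ω. If E_p(Ω) = +∞, then for every ℓ ∈ ℕ\{0} and every α > 0 there exists C_ℓ = C_ℓ(N,p,Ω,α) > 0 such that |u_ℓ(x)| ≤ C_ℓ ‖u_ℓ‖_{L^p(Ω)} e^{−α |x|} for every x ∈ Ω. -/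
open MeasureTheory Filter Topology Metric Set ENNReal
open scoped RealInnerProductSpace

noncomputable section

/-- Euclidean space `ℝ^N`. -/
abbrev EucN (N : ℕ) := EuclideanSpace ℝ (Fin N)

/-- A test function on an open set `Ω ⊆ ℝ^N`: smooth, with compact support contained in `Ω`. -/
def IsTestFun {N : ℕ} (Ω : Set (EucN N)) (φ : EucN N → ℝ) : Prop :=
  ContDiff ℝ (⊤ : ℕ∞) φ ∧ HasCompactSupport φ ∧ tsupport φ ⊆ Ω

/-- Pairs `(u, g)` in `L^q × L^q`, thought of as a function together with its (weak) gradient. -/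
abbrev SobPair (N : ℕ) (q : ℝ≥0∞) :=
  Lp ℝ q (volume : Measure (EucN N)) × Lp (EucN N) q (volume : Measure (EucN N))

/-- A pair given (a.e.) by a test function and its gradient. -/
def IsTestPair {N : ℕ} (q : ℝ≥0∞) (Ω : Set (EucN N)) (w : SobPair N q) : Prop :=
  ∃ ψ : EucN N → ℝ, IsTestFun Ω ψ ∧ (⇑w.1 =ᵐ[volume] ψ) ∧
    (⇑w.2 =ᵐ[volume] fun x => gradient ψ x)

theorem fact_one_le_ofReal {p : ℝ} (hp : 1 ≤ p) : Fact (1 ≤ ENNReal.ofReal p) :=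
  ⟨ENNReal.one_le_ofReal.mpr hp⟩

/-- The Sobolev space `W^{1,p}_0(Ω)`, realized as the closure in `L^p × L^p` of the set of
pairs (test function, its gradient). -/
def W10 (N : ℕ) (p : ℝ) (hp : 1 ≤ p) (Ω : Set (EucN N)) :
    Set (SobPair N (ENNReal.ofReal p)) :=
  letI := fact_one_le_ofReal hp
  closure {w | IsTestPair (ENNReal.ofReal p) Ω w}

/-- The first eigenvalue `λ_{1,p}(Ω)` (as an extended real, `∞` if there are no admissible
functions). -/
def lambda1p (N : ℕ) (p : ℝ) (hp : 1 ≤ p) (Ω : Set (EucN N)) : ℝ≥0∞ :=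
  sInf {t | ∃ w ∈ W10 N p hp Ω, (∫ x, |w.1 x| ^ p) = 1 ∧
    t = ENNReal.ofReal (∫ x, ‖w.2 x‖ ^ p)}

/-- The `L^p` Poincaré constant "at infinity" `E_p(Ω)`. -/
def Einfty (N : ℕ) (p : ℝ) (hp : 1 ≤ p) (Ω : Set (EucN N)) : ℝ≥0∞ :=
  ⨆ R ∈ Set.Ioi (0 : ℝ), lambda1p N p hp (Ω \ closure (ball (0 : EucN N) R))

/-- There is a continuous odd map from `A` to the unit sphere `S^{j-1} ⊆ ℝ^j`. -/
def HasOddMapToSphere {Z : Type*} [NormedAddCommGroup Z] (A : Set Z) (j : ℕ) : Prop :=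
  ∃ f : Z → EuclideanSpace ℝ (Fin j),
    ContinuousOn f A ∧ (∀ x ∈ A, ‖f x‖ = 1) ∧ ∀ x ∈ A, f (-x) = -f x

/-- The Krasnosel'skii genus of `A` is at least `k`. -/
def genusGE {Z : Type*} [NormedAddCommGroup Z] (A : Set Z) (k : ℕ) : Prop :=
  ∀ j : ℕ, HasOddMapToSphere A j → k ≤ j

/-- The Krasnosel'skii genus of `A`, valued in `ℕ∞`. -/
def genus {Z : Type*} [NormedAddCommGroup Z] (A : Set Z) : ℕ∞ :=
  sInf {k : ℕ∞ | ∃ j : ℕ, (j : ℕ∞) = k ∧ HasOddMapToSphere A j}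

/-- The class `𝒲_{k,p}(Ω)` of compact symmetric subsets of `S_p(Ω) ∩ W^{1,p}_0(Ω)` with
genus at least `k`. -/
def SobClass (N : ℕ) (p : ℝ) (hp : 1 ≤ p) (Ω : Set (EucN N)) (k : ℕ) :
    Set (Set (SobPair N (ENNReal.ofReal p))) :=
  letI := fact_one_le_ofReal hp
  {K | K ⊆ W10 N p hp Ω ∧ (∀ w ∈ K, (∫ x, |w.1 x| ^ p) = 1) ∧
       (∀ w ∈ K, -w ∈ K) ∧ IsCompact K ∧ genusGE K k}

/-- The `k`-th minmax Ljusternik–Schnirelmann value `λ_{k,p}^{LS}(Ω)`. -/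
def lambdaLS (N : ℕ) (p : ℝ) (hp : 1 ≤ p) (Ω : Set (EucN N)) (k : ℕ) : ℝ≥0∞ :=
  ⨅ K ∈ SobClass N p hp Ω k, ⨆ w ∈ K, ENNReal.ofReal (∫ x, ‖w.2 x‖ ^ p)

/-- `w = (u, ∇u)` is an eigenfunction of the Dirichlet `p`-Laplacian on `Ω` associated to the
eigenvalue `lam`. -/
def IsEigenfunction (N : ℕ) (p : ℝ) (hp : 1 ≤ p) (Ω : Set (EucN N)) (lam : ℝ)
    (w : SobPair N (ENNReal.ofReal p)) : Prop :=
  w ∈ W10 N p hp Ω ∧ w ≠ 0 ∧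
  ∀ φ : EucN N → ℝ, IsTestFun Ω φ →
    (∫ x, ‖w.2 x‖ ^ (p - 2) * ⟪w.2 x, gradient φ x⟫) =
      lam * ∫ x, |w.1 x| ^ (p - 2) * (w.1 x) * φ x

/-- `lam` is an eigenvalue of the Dirichlet `p`-Laplacian on `Ω`. -/
def IsEigenvalue (N : ℕ) (p : ℝ) (hp : 1 ≤ p) (Ω : Set (EucN N)) (lam : ℝ) : Prop :=
  ∃ w, IsEigenfunction N p hp Ω lam w

/-- `v = (v, ∇v)` is a non-negative weak subsolution of `-Δ_p u = lam · u^{p-1}` in `Ω`. -/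
def IsSubsolution (N : ℕ) (p : ℝ) (hp : 1 ≤ p) (Ω : Set (EucN N)) (lam : ℝ)
    (v : SobPair N (ENNReal.ofReal p)) : Prop :=
  v ∈ W10 N p hp Ω ∧ (∀ᵐ x, 0 ≤ v.1 x) ∧
  ∀ φ ∈ W10 N p hp Ω, (∀ᵐ x, 0 ≤ φ.1 x) →
    (∫ x, ‖v.2 x‖ ^ (p - 2) * ⟪v.2 x, φ.2 x⟫) ≤ lam * ∫ x, (v.1 x) ^ (p - 1) * φ.1 x

/-- A strongly confining potential. -/
def StronglyConfining (N : ℕ) (V : EucN N → ℝ) : Prop :=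
  LocallyIntegrable V volume ∧ (∀ᵐ x, 0 ≤ V x) ∧
  ∃ α : ℝ → ℝ, (∀ R > (0 : ℝ), 0 < α R) ∧ MonotoneOn α (Set.Ioi 0) ∧
    Tendsto α atTop atTop ∧
    ∀ R > (0 : ℝ), ∀ᵐ x, x ∉ ball (0 : EucN N) R → α R ≤ V x

/-- Triples `(u, g, h)` in `L^q × L^q × L^q`; `h` plays the role of `V^{1/p} u` in the weighted
Sobolev space. -/
abbrev SobTriple (N : ℕ) (q : ℝ≥0∞) :=
  Lp ℝ q (volume : Measure (EucN N)) × Lp (EucN N) q (volume : Measure (EucN N)) ×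
    Lp ℝ q (volume : Measure (EucN N))

/-- A triple given (a.e.) by a test function, its gradient, and `V^{1/p}` times it. -/
def IsTestTriple {N : ℕ} (q : ℝ≥0∞) (p : ℝ) (Ω : Set (EucN N)) (V : EucN N → ℝ)
    (w : SobTriple N q) : Prop :=
  ∃ ψ : EucN N → ℝ, IsTestFun Ω ψ ∧ (⇑w.1 =ᵐ[volume] ψ) ∧
    (⇑w.2.1 =ᵐ[volume] fun x => gradient ψ x) ∧
    (⇑w.2.2 =ᵐ[volume] fun x => (V x) ^ (1/p) * ψ x)

/-- The weighted Sobolev space `W^{1,p}_0(Ω; V)`, realized as a closure of triples coming from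
test functions; the norm topology of `L^p × L^p × L^p` on such triples corresponds exactly to
the weighted Sobolev norm `(∫|∇u|^p + ∫(1+V)|u|^p)^{1/p}`. -/
def W10V (N : ℕ) (p : ℝ) (hp : 1 ≤ p) (Ω : Set (EucN N)) (V : EucN N → ℝ) :
    Set (SobTriple N (ENNReal.ofReal p)) :=
  letI := fact_one_le_ofReal hp
  closure {w | IsTestTriple (ENNReal.ofReal p) p Ω V w}

/-- The class `𝒲_{k,p}(Ω; V)` for the weighted space. -/
def SobClassV (N : ℕ) (p : ℝ) (hp : 1 ≤ p) (Ω : Set (EucN N)) (V : EucN N → ℝ) (k : ℕ) :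
    Set (Set (SobTriple N (ENNReal.ofReal p))) :=
  letI := fact_one_le_ofReal hp
  {K | K ⊆ W10V N p hp Ω V ∧ (∀ w ∈ K, (∫ x, |w.1 x| ^ p) = 1) ∧
       (∀ w ∈ K, -w ∈ K) ∧ IsCompact K ∧ genusGE K k}

/-- The perturbed minmax value `λ_{k,p}^{LS}(Ω; ε V)`, for the functional
`G(φ) = ∫|∇φ|^p + ε ∫ V |φ|^p`. -/
def lambdaLSV (N : ℕ) (p : ℝ) (hp : 1 ≤ p) (Ω : Set (EucN N)) (V : EucN N → ℝ)
    (ε : ℝ) (k : ℕ) : ℝ≥0∞ :=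
  ⨅ K ∈ SobClassV N p hp Ω V k, ⨆ w ∈ K,
    ENNReal.ofReal ((∫ x, ‖w.2.1 x‖ ^ p) + ε * ∫ x, |w.2.2 x| ^ p)

/-- `w` is a constrained critical point, at level `lam`, of the perturbed functional
`G(φ) = ∫|∇φ|^p + ε ∫ V |φ|^p` on the unit sphere of `L^p`. -/
def IsCriticalV (N : ℕ) (p : ℝ) (hp : 1 ≤ p) (Ω : Set (EucN N)) (V : EucN N → ℝ)
    (ε : ℝ) (lam : ℝ) (w : SobTriple N (ENNReal.ofReal p)) : Prop :=
  w ∈ W10V N p hp Ω V ∧ (∫ x, |w.1 x| ^ p) = 1 ∧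
  ∀ φ : EucN N → ℝ, IsTestFun Ω φ →
    (∫ x, ‖w.2.1 x‖ ^ (p - 2) * ⟪w.2.1 x, gradient φ x⟫)
      + ε * ∫ x, V x * |w.1 x| ^ (p - 2) * (w.1 x) * φ x
    = lam * ∫ x, |w.1 x| ^ (p - 2) * (w.1 x) * φ x

/-- The embedding `W^{1,p}_0(Ω) ↪ L^p(Ω)` is compact: every bounded sequence in `W^{1,p}_0(Ω)`
has a subsequence converging strongly in `L^p`. -/
def CompactSobolevEmbedding (N : ℕ) (p : ℝ) (hp : 1 ≤ p) (Ω : Set (EucN N)) : Prop :=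
  ∀ w : ℕ → SobPair N (ENNReal.ofReal p), (∀ n, w n ∈ W10 N p hp Ω) →
    (∃ M : ℝ≥0∞, M ≠ ⊤ ∧ ∀ n, eLpNorm (⇑(w n).1) (ENNReal.ofReal p) volume ≤ M ∧
        eLpNorm (⇑(w n).2) (ENNReal.ofReal p) volume ≤ M) →
    ∃ σ : ℕ → ℕ, StrictMono σ ∧ ∃ u : EucN N → ℝ, MemLp u (ENNReal.ofReal p) volume ∧
      Tendsto (fun n => eLpNorm (⇑(w (σ n)).1 - u) (ENNReal.ofReal p) volume) atTop (𝓝 0)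


/-! ### Elementary real inequalities -/

theorem aux_young {p : ℝ} (hp : 1 < p) {ε : ℝ} (hε : 0 < ε) :
    ∃ C : ℝ, 0 ≤ C ∧ ∀ a t : ℝ, 0 ≤ a → 0 ≤ t → t * a ^ (p - 1) ≤ ε * a ^ p + C * t ^ p := by
  refine ⟨(1 / ε) ^ (p - 1), by positivity, fun a t ha ht => ?_⟩
  rcases le_total t (ε * a) with h | h
  · have h1 : t * a ^ (p - 1) ≤ ε * a ^ p := by
      rcases ha.eq_or_lt with h0 | h0
      · subst h0
        rw [Real.zero_rpow (by linarith), Real.zero_rpow (by linarith)]; simp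
      · have : a ^ p = a * a ^ (p - 1) := by
          rw [Real.rpow_sub_one h0.ne']; field_simp
        rw [this, ← mul_assoc]
        exact mul_le_mul_of_nonneg_right h (by positivity)
    have : 0 ≤ (1 / ε) ^ (p - 1) * t ^ p := by positivity
    linarith
  · have h2 : a ≤ 1 / ε * t := by
      rw [one_div, inv_mul_eq_div, le_div_iff₀ hε]; linarith
    have h1 : t * a ^ (p - 1) ≤ (1 / ε) ^ (p - 1) * t ^ p := by
      rcases ht.eq_or_lt with h0 | h0
      · subst h0
        rw [Real.zero_rpow (by linarith)]; simp
      · have : t ^ p = t * t ^ (p - 1) := by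
          rw [Real.rpow_sub_one h0.ne']; field_simp
        calc t * a ^ (p - 1) ≤ t * (1 / ε * t) ^ (p - 1) :=
              mul_le_mul_of_nonneg_left (Real.rpow_le_rpow ha h2 (by linarith)) ht
          _ = _ := by rw [Real.mul_rpow (by positivity) ht, this]; ring
    have : 0 ≤ ε * a ^ p := by positivity
    linarith

theorem aux_add_pow {p : ℝ} (hp : 1 < p) {ε : ℝ} (hε : 0 < ε) :
    ∃ C : ℝ, 0 ≤ C ∧ ∀ a b : ℝ, 0 ≤ a → 0 ≤ b → (a + b) ^ p ≤ (1 + ε) * a ^ p + C * b ^ p := by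
  obtain ⟨θ, hθ, h1⟩ : ∃ θ : ℝ, 0 < θ ∧ (1 + θ) ^ p ≤ 1 + ε := by
    refine ⟨(1 + ε) ^ (1 / p) - 1, ?_, ?_⟩
    · have : 1 < (1 + ε) ^ (1 / p) := Real.one_lt_rpow (by linarith) (by positivity)
      linarith
    · rw [add_sub_cancel, ← Real.rpow_mul (by linarith), one_div_mul_cancel (by linarith),
        Real.rpow_one]
  refine ⟨(1 / θ + 1) ^ p, by positivity, fun a b ha hb => ?_⟩
  rcases le_total b (θ * a) with h | h
  · have : (a + b) ^ p ≤ ((1 + θ) * a) ^ p :=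
      Real.rpow_le_rpow (by positivity) (by linarith) (by linarith)
    rw [Real.mul_rpow (by positivity) ha] at this
    have h2 : (1 + θ) ^ p * a ^ p ≤ (1 + ε) * a ^ p :=
      mul_le_mul_of_nonneg_right h1 (by positivity)
    have : 0 ≤ (1 / θ + 1) ^ p * b ^ p := by positivity
    linarith
  · have h2 : a ≤ 1 / θ * b := by
      rw [one_div, inv_mul_eq_div, le_div_iff₀ hθ]; linarith
    have : (a + b) ^ p ≤ ((1 / θ + 1) * b) ^ p :=
      Real.rpow_le_rpow (by positivity) (by linarith) (by linarith)
    rw [Real.mul_rpow (by positivity) hb] at this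
    have : 0 ≤ (1 + ε) * a ^ p := by positivity
    linarith

theorem aux_pow_add_le {p : ℝ} (hp : 1 < p) {a b : ℝ} (ha : 0 ≤ a) (hb : 0 ≤ b) :
    (a + b) ^ p ≤ 2 ^ p * (a ^ p + b ^ p) := by
  have h : a + b ≤ 2 * max a b := by
    have := le_max_left a b; have := le_max_right a b; linarith
  have h1 : (a + b) ^ p ≤ (2 * max a b) ^ p :=
    Real.rpow_le_rpow (by positivity) h (by linarith)
  rw [Real.mul_rpow (by norm_num) (by positivity)] at h1
  refine h1.trans (mul_le_mul_of_nonneg_left ?_ (by positivity))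
  rcases max_choice a b with h | h <;> rw [h]
  · have : 0 ≤ b ^ p := by positivity
    linarith
  · have : 0 ≤ a ^ p := by positivity
    linarith

theorem aux_norm_pow_inner {N : ℕ} {p : ℝ} (hp : 1 < p) (a : EucN N) :
    ‖a‖ ^ (p - 2) * ⟪a, a⟫ = ‖a‖ ^ p := by
  rw [real_inner_self_eq_norm_sq]
  by_cases h : ‖a‖ = 0
  · rw [h]; simp [Real.zero_rpow (show p ≠ 0 by linarith)]
  · rw [← Real.rpow_natCast ‖a‖ 2, ← Real.rpow_add (by positivity)]
    congr 1; push_cast; ring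

theorem aux_norm_pow_inner_le {N : ℕ} {p : ℝ} (a b : EucN N) :
    |‖a‖ ^ (p - 2) * ⟪a, b⟫| ≤ ‖a‖ ^ (p - 1) * ‖b‖ := by
  rw [abs_mul, abs_of_nonneg (by positivity)]
  by_cases h : ‖a‖ = 0
  · have : a = 0 := norm_eq_zero.mp h
    subst this
    simp
    positivity
  · have h1 : ‖a‖ ^ (p - 1) = ‖a‖ ^ (p - 2) * ‖a‖ := by
      rw [show p - 1 = (p - 2) + 1 by ring, Real.rpow_add_one h]
    rw [h1, mul_assoc]
    exact mul_le_mul_of_nonneg_left (abs_real_inner_le_norm a b) (by positivity)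

/-- The key pointwise inequality for the Agmon step. -/
theorem aux_key {p : ℝ} (hp : 1 < p) {ε : ℝ} (hε : 0 < ε) :
    ∃ C : ℝ, 0 ≤ C ∧ ∀ (N : ℕ) (a b : EucN N),
      ‖a + b‖ ^ p ≤ (1 + ε) * (‖a‖ ^ p + p * (‖a‖ ^ (p - 2) * ⟪a, b⟫)) + C * ‖b‖ ^ p := by
  -- choose s with (1+s) ≤ (1+ε)(1-s)
  obtain ⟨s, hs, hs1⟩ : ∃ s : ℝ, 0 < s ∧ 1 + s ≤ (1 + ε) * (1 - s) :=
    ⟨ε / (2 + ε), by positivity, by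
      have : (0:ℝ) < 2 + ε := by linarith
      have e : 1 - ε / (2 + ε) = 2 / (2 + ε) := by field_simp; ring
      have e2 : 1 + ε / (2 + ε) = (2 + 2 * ε) / (2 + ε) := by field_simp; ring
      rw [e, e2, mul_div_assoc', div_le_div_iff_of_pos_right this]; linarith⟩
  obtain ⟨C1, hC1, h1⟩ := aux_add_pow hp hs
  obtain ⟨C2, hC2, h2⟩ := aux_young hp (ε := s / p) (by positivity)
  refine ⟨C1 + (1 + ε) * (p * C2), by positivity, fun N a b => ?_⟩
  have k1 : ‖a + b‖ ^ p ≤ (1 + s) * ‖a‖ ^ p + C1 * ‖b‖ ^ p :=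
    (Real.rpow_le_rpow (norm_nonneg _) (norm_add_le a b) (by linarith)).trans
      (h1 _ _ (norm_nonneg _) (norm_nonneg _))
  have k2 := h2 ‖a‖ ‖b‖ (norm_nonneg _) (norm_nonneg _)
  have k3 := (abs_le.mp (aux_norm_pow_inner_le (p := p) a b)).1
  have k4 : -(s * ‖a‖ ^ p + p * C2 * ‖b‖ ^ p) ≤ p * (‖a‖ ^ (p - 2) * ⟪a, b⟫) := by
    have : p * (‖b‖ * ‖a‖ ^ (p - 1)) ≤ p * (s / p * ‖a‖ ^ p + C2 * ‖b‖ ^ p) :=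
      mul_le_mul_of_nonneg_left k2 (by linarith)
    have e : p * (s / p * ‖a‖ ^ p + C2 * ‖b‖ ^ p) = s * ‖a‖ ^ p + p * C2 * ‖b‖ ^ p := by
      field_simp
    nlinarith
  have k5 : (1 + s) * ‖a‖ ^ p ≤ (1 + ε) * (1 - s) * ‖a‖ ^ p :=
    mul_le_mul_of_nonneg_right hs1 (by positivity)
  have k6 : (1 + ε) * -(s * ‖a‖ ^ p + p * C2 * ‖b‖ ^ p)
      ≤ (1 + ε) * (p * (‖a‖ ^ (p - 2) * ⟪a, b⟫)) :=
    mul_le_mul_of_nonneg_left k4 (by linarith)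
  nlinarith

/-! ### The smooth convex truncation -/

/-- A smooth convex function, zero on `(-∞, 0]`, comparable with `t` for large `t`. -/
def F0 (t : ℝ) : ℝ := t * expNegInvGlue t

theorem F0_contDiff : ContDiff ℝ (⊤ : ℕ∞) F0 := contDiff_id.mul expNegInvGlue.contDiff

theorem F0_nonpos {t : ℝ} (ht : t ≤ 0) : F0 t = 0 := by
  simp [F0, expNegInvGlue.zero_of_nonpos ht]

theorem F0_pos {t : ℝ} (ht : 0 < t) : F0 t = t * Real.exp (-t⁻¹) := by
  simp [F0, expNegInvGlue, not_le.mpr ht]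

theorem F0_nonneg (t : ℝ) : 0 ≤ F0 t := by
  rcases le_or_gt t 0 with h | h
  · rw [F0_nonpos h]
  · rw [F0_pos h]; positivity

theorem F0_deriv_nonpos {t : ℝ} (ht : t ≤ 0) : deriv F0 t = 0 := by
  apply IsLocalMin.deriv_eq_zero
  apply Filter.Eventually.of_forall
  intro s
  rw [F0_nonpos ht]; exact F0_nonneg s

theorem F0_deriv_pos {t : ℝ} (ht : 0 < t) : deriv F0 t = (1 + t⁻¹) * Real.exp (-t⁻¹) := by
  have h : HasDerivAt (fun t : ℝ => t * Real.exp (-t⁻¹))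
      (1 * Real.exp (-t⁻¹) + t * (Real.exp (-t⁻¹) * -(-(t ^ 2)⁻¹))) t :=
    (hasDerivAt_id t).mul ((hasDerivAt_inv ht.ne').neg.exp)
  have h2 : F0 =ᶠ[𝓝 t] fun t : ℝ => t * Real.exp (-t⁻¹) := by
    filter_upwards [lt_mem_nhds ht] with s hs using F0_pos hs
  rw [h2.deriv_eq, h.deriv]
  field_simp

theorem F0_deriv_nonneg (t : ℝ) : 0 ≤ deriv F0 t := by
  rcases le_or_gt t 0 with h | h
  · rw [F0_deriv_nonpos h]
  · rw [F0_deriv_pos h]; positivity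

theorem F0_deriv_le_one (t : ℝ) : deriv F0 t ≤ 1 := by
  rcases le_or_gt t 0 with h | h
  · rw [F0_deriv_nonpos h]; norm_num
  · rw [F0_deriv_pos h, Real.exp_neg, ← div_eq_mul_inv, div_le_one (Real.exp_pos _)]
    have := Real.add_one_le_exp t⁻¹
    linarith

theorem F0_le (t : ℝ) : F0 t ≤ t * deriv F0 t := by
  rcases le_or_gt t 0 with h | h
  · rw [F0_deriv_nonpos h, F0_nonpos h]; simp
  · rw [F0_pos h, F0_deriv_pos h]
    refine mul_le_mul_of_nonneg_left ?_ h.le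
    have : 0 ≤ t⁻¹ * Real.exp (-t⁻¹) := by positivity
    linarith

theorem F0_ge {t : ℝ} (ht : 1 ≤ t) : Real.exp (-1) * t ≤ F0 t := by
  rw [F0_pos (by linarith), mul_comm]
  refine mul_le_mul_of_nonneg_left (Real.exp_le_exp.mpr ?_) (by linarith)
  have := inv_le_one_of_one_le₀ ht
  linarith

/-- The truncation at height `k` with width `e`. -/
def FT (k e t : ℝ) : ℝ := e * F0 ((t - k) / e)

theorem FT_contDiff (k e : ℝ) : ContDiff ℝ (⊤ : ℕ∞) (FT k e) :=
  contDiff_const.mul (F0_contDiff.comp ((contDiff_id.sub contDiff_const).div_const e))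

theorem FT_deriv {k e : ℝ} (he : 0 < e) (t : ℝ) : deriv (FT k e) t = deriv F0 ((t - k) / e) := by
  have h0 : HasDerivAt F0 (deriv F0 ((t - k) / e)) ((t - k) / e) :=
    (F0_contDiff.differentiable (by simp)).differentiableAt.hasDerivAt
  have h1 : HasDerivAt (fun t : ℝ => (t - k) / e) (1 / e) t :=
    ((hasDerivAt_id t).sub_const k).div_const e
  have h2 := (h0.comp t h1).const_mul e
  have h3 : HasDerivAt (FT k e) (e * (deriv F0 ((t - k) / e) * (1 / e))) t := h2
  rw [h3.deriv]; field_simp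

theorem FT_of_le {k e t : ℝ} (he : 0 < e) (ht : t ≤ k) : FT k e t = 0 := by
  rw [FT, F0_nonpos (div_nonpos_of_nonpos_of_nonneg (by linarith) he.le)]; simp

theorem FT_deriv_of_le {k e t : ℝ} (he : 0 < e) (ht : t ≤ k) : deriv (FT k e) t = 0 := by
  rw [FT_deriv he, F0_deriv_nonpos (div_nonpos_of_nonpos_of_nonneg (by linarith) he.le)]

theorem FT_nonneg {k e : ℝ} (he : 0 < e) (t : ℝ) : 0 ≤ FT k e t :=
  mul_nonneg he.le (F0_nonneg _)

theorem FT_le {k e : ℝ} (hk : 0 ≤ k) (he : 0 < e) (t : ℝ) : FT k e t ≤ |t| * deriv (FT k e) t := by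
  rcases le_or_gt t k with h | h
  · rw [FT_of_le he h, FT_deriv_of_le he h]; simp
  · rw [FT_deriv he, FT, abs_of_pos (by linarith)]
    have h1 := mul_le_mul_of_nonneg_left (F0_le ((t - k) / e)) he.le
    have h2 : e * ((t - k) / e * deriv F0 ((t - k) / e)) = (t - k) * deriv F0 ((t - k) / e) := by
      field_simp
    rw [h2] at h1
    refine h1.trans (mul_le_mul_of_nonneg_right (by linarith) (F0_deriv_nonneg _))

theorem FT_le_abs {k e : ℝ} (hk : 0 ≤ k) (he : 0 < e) (t : ℝ) : FT k e t ≤ |t| := by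
  refine (FT_le hk he t).trans ?_
  rw [FT_deriv he]
  exact mul_le_of_le_one_right (abs_nonneg _) (F0_deriv_le_one _)

theorem FT_ge {k h t : ℝ} (hk : 0 ≤ k) (hh : k < h) (ht : h ≤ t) :
    t ≤ Real.exp 1 * (h / (h - k)) * FT k (h - k) t := by
  have he : 0 < h - k := by linarith
  have h1 : 1 ≤ (t - k) / (h - k) := by rw [le_div_iff₀ he]; linarith
  have h2 := mul_le_mul_of_nonneg_left (F0_ge h1) he.le
  have h3 : (h - k) * (Real.exp (-1) * ((t - k) / (h - k))) = Real.exp (-1) * (t - k) := by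
    field_simp
  rw [h3] at h2
  have h4 : Real.exp 1 * (h / (h - k)) * (Real.exp (-1) * (t - k))
      ≤ Real.exp 1 * (h / (h - k)) * FT k (h - k) t :=
    mul_le_mul_of_nonneg_left h2 (mul_nonneg (Real.exp_pos _).le (div_nonneg (by linarith) he.le))
  refine le_trans ?_ h4
  have h5 : Real.exp 1 * (h / (h - k)) * (Real.exp (-1) * (t - k)) = h * (t - k) / (h - k) := by
    rw [Real.exp_neg]; field_simp
  rw [h5, le_div_iff₀ he]
  nlinarith


/-! ### Gradients -/

theorem grad_eq {N : ℕ} (f : EucN N → ℝ) (x : EucN N) :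
    gradient f x = (InnerProductSpace.toDual ℝ (EucN N)).symm (fderiv ℝ f x) := rfl

theorem norm_grad {N : ℕ} (f : EucN N → ℝ) (x : EucN N) :
    ‖gradient f x‖ = ‖fderiv ℝ f x‖ := by
  rw [grad_eq, LinearIsometryEquiv.norm_map]

theorem grad_mul {N : ℕ} {A f : EucN N → ℝ} {x : EucN N} (hA : DifferentiableAt ℝ A x)
    (hf : DifferentiableAt ℝ f x) :
    gradient (fun y => A y * f y) x = A x • gradient f x + f x • gradient A x := by
  simp only [grad_eq, fderiv_fun_mul hA hf, map_add, map_smul]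

theorem grad_comp {N : ℕ} {F : ℝ → ℝ} {f : EucN N → ℝ} {x : EucN N}
    (hF : DifferentiableAt ℝ F (f x)) (hf : DifferentiableAt ℝ f x) :
    gradient (fun y => F (f y)) x = deriv F (f x) • gradient f x := by
  have h : HasFDerivAt (fun y => F (f y)) (deriv F (f x) • fderiv ℝ f x) x :=
    hF.hasDerivAt.comp_hasFDerivAt x hf.hasFDerivAt
  simp only [grad_eq, h.fderiv, map_smul]

theorem continuous_grad {N : ℕ} {f : EucN N → ℝ} (hf : ContDiff ℝ (⊤ : ℕ∞) f) :
    Continuous (gradient f) :=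
  (InnerProductSpace.toDual ℝ (EucN N)).symm.continuous.comp (hf.continuous_fderiv (by simp))

theorem IsTestFun.diff {N : ℕ} {Ω : Set (EucN N)} {φ : EucN N → ℝ} (h : IsTestFun Ω φ) :
    Differentiable ℝ φ := h.1.differentiable (by simp)

theorem IsTestFun.memLp {N : ℕ} {Ω : Set (EucN N)} {φ : EucN N → ℝ} (h : IsTestFun Ω φ)
    (q : ℝ≥0∞) : MemLp φ q volume :=
  h.1.continuous.memLp_of_hasCompactSupport h.2.1

theorem IsTestFun.memLp_grad {N : ℕ} {Ω : Set (EucN N)} {φ : EucN N → ℝ} (h : IsTestFun Ω φ)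
    (q : ℝ≥0∞) : MemLp (gradient φ) q volume :=
  (continuous_grad h.1).memLp_of_hasCompactSupport
    ((h.2.1.fderiv (𝕜 := ℝ)).comp_left (g := (InnerProductSpace.toDual ℝ (EucN N)).symm)
      (map_zero _))

/-! ### Function-level version of `W^{1,p}_0` -/

/-- `u ∈ W^{1,p}_0(Ω)` with weak gradient `g`. -/
def W0 {N : ℕ} (p : ℝ) (Ω : Set (EucN N)) (u : EucN N → ℝ) (g : EucN N → EucN N) : Prop :=
  MemLp u (ENNReal.ofReal p) volume ∧ MemLp g (ENNReal.ofReal p) volume ∧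
  ∃ φ : ℕ → EucN N → ℝ, (∀ n, IsTestFun Ω (φ n)) ∧
    Tendsto (fun n => eLpNorm (φ n - u) (ENNReal.ofReal p) volume) atTop (𝓝 0) ∧
    Tendsto (fun n => eLpNorm (gradient (φ n) - g) (ENNReal.ofReal p) volume) atTop (𝓝 0)

theorem W0_of_mem {N : ℕ} {p : ℝ} {hp : 1 ≤ p} {Ω : Set (EucN N)}
    {w : SobPair N (ENNReal.ofReal p)} (hw : w ∈ W10 N p hp Ω) : W0 p Ω w.1 w.2 := by
  have := fact_one_le_ofReal hp
  refine ⟨Lp.memLp _, Lp.memLp _, ?_⟩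
  obtain ⟨x, hx, hlim⟩ := mem_closure_iff_seq_limit.mp hw
  choose φ hφ h1 h2 using hx
  refine ⟨φ, hφ, ?_, ?_⟩
  · have := (continuous_fst.tendsto w).comp hlim
    rw [Lp.tendsto_Lp_iff_tendsto_eLpNorm'] at this
    refine this.congr fun n => ?_
    exact eLpNorm_congr_ae ((h1 n).sub (ae_eq_refl _))
  · have := (continuous_snd.tendsto w).comp hlim
    rw [Lp.tendsto_Lp_iff_tendsto_eLpNorm'] at this
    refine this.congr fun n => ?_
    exact eLpNorm_congr_ae ((h2 n).sub (ae_eq_refl _))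

theorem mem_of_W0 {N : ℕ} {p : ℝ} {hp : 1 ≤ p} {Ω : Set (EucN N)}
    {u : EucN N → ℝ} {g : EucN N → EucN N} (h : W0 p Ω u g) :
    ((h.1.toLp u, h.2.1.toLp g) : SobPair N (ENNReal.ofReal p)) ∈ W10 N p hp Ω := by
  have := fact_one_le_ofReal hp
  obtain ⟨hu, hg, φ, hφ, h1, h2⟩ := h
  refine mem_closure_iff_seq_limit.mpr
    ⟨fun n => (((hφ n).memLp _).toLp (φ n), ((hφ n).memLp_grad _).toLp (gradient (φ n))),
      fun n => ⟨φ n, hφ n, MemLp.coeFn_toLp ((hφ n).memLp _), MemLp.coeFn_toLp ((hφ n).memLp_grad _)⟩, ?_⟩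
  refine Tendsto.prodMk_nhds ?_ ?_
  · rw [Lp.tendsto_Lp_iff_tendsto_eLpNorm']
    refine h1.congr fun n => ?_
    exact eLpNorm_congr_ae ((MemLp.coeFn_toLp _).sub (MemLp.coeFn_toLp _)).symm
  · rw [Lp.tendsto_Lp_iff_tendsto_eLpNorm']
    refine h2.congr fun n => ?_
    exact eLpNorm_congr_ae ((MemLp.coeFn_toLp _).sub (MemLp.coeFn_toLp _)).symm

/-- One may choose the approximating test functions converging a.e. -/
theorem W0.exists_ae {N : ℕ} {p : ℝ} (hp : 1 ≤ p) {Ω : Set (EucN N)}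
    {u : EucN N → ℝ} {g : EucN N → EucN N} (h : W0 p Ω u g) :
    ∃ φ : ℕ → EucN N → ℝ, (∀ n, IsTestFun Ω (φ n)) ∧
    Tendsto (fun n => eLpNorm (φ n - u) (ENNReal.ofReal p) volume) atTop (𝓝 0) ∧
    Tendsto (fun n => eLpNorm (gradient (φ n) - g) (ENNReal.ofReal p) volume) atTop (𝓝 0) ∧
    (∀ᵐ x, Tendsto (fun n => φ n x) atTop (𝓝 (u x))) ∧
    (∀ᵐ x, Tendsto (fun n => gradient (φ n) x) atTop (𝓝 (g x))) := by
  obtain ⟨hu, hg, φ, hφ, h1, h2⟩ := h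
  have hp0 : ENNReal.ofReal p ≠ 0 := by
    simp only [ne_eq, ENNReal.ofReal_eq_zero, not_le]; linarith
  have m1 := tendstoInMeasure_of_tendsto_eLpNorm hp0
    (fun n => ((hφ n).memLp (ENNReal.ofReal p)).1) hu.1 h1
  obtain ⟨σ, hσ, a1⟩ := m1.exists_seq_tendsto_ae
  have m2 := tendstoInMeasure_of_tendsto_eLpNorm hp0
    (fun n => ((hφ (σ n)).memLp_grad (ENNReal.ofReal p)).1) hg.1 (h2.comp hσ.tendsto_atTop)
  obtain ⟨τ, hτ, a2⟩ := m2.exists_seq_tendsto_ae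
  refine ⟨fun n => φ (σ (τ n)), fun n => hφ _, h1.comp (hσ.tendsto_atTop.comp hτ.tendsto_atTop),
    h2.comp (hσ.tendsto_atTop.comp hτ.tendsto_atTop), ?_, a2⟩
  filter_upwards [a1] with x hx
  exact hx.comp hτ.tendsto_atTop

/-- Multiplication by a smooth bounded function with bounded gradient. -/
theorem W0.mul {N : ℕ} {p : ℝ} (hp : 1 ≤ p) {Ω Ω' : Set (EucN N)}
    {u : EucN N → ℝ} {g : EucN N → EucN N} (h : W0 p Ω u g) {A : EucN N → ℝ}
    (hA : ContDiff ℝ (⊤ : ℕ∞) A) {L : ℝ} (hL : ∀ x, |A x| ≤ L)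
    (hL' : ∀ x, ‖gradient A x‖ ≤ L) (hsupp : tsupport A ∩ Ω ⊆ Ω') :
    W0 p Ω' (fun x => A x * u x) (fun x => A x • g x + u x • gradient A x) := by
  obtain ⟨hu, hg, φ, hφ, h1, h2⟩ := h
  have hq : 1 ≤ ENNReal.ofReal p := ENNReal.one_le_ofReal.mpr hp
  have cA : Continuous A := hA.continuous
  have cG : Continuous (gradient A) := continuous_grad hA
  have L0 : 0 ≤ L := (abs_nonneg _).trans (hL 0)
  -- general bounds
  have b1 : ∀ f : EucN N → ℝ, AEStronglyMeasurable f volume →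
      eLpNorm (fun x => A x * f x) (ENNReal.ofReal p) volume
        ≤ ENNReal.ofReal L * eLpNorm f (ENNReal.ofReal p) volume := fun f _ =>
    eLpNorm_le_mul_eLpNorm_of_ae_le_mul (Eventually.of_forall fun x => by
      rw [norm_mul]; exact mul_le_mul_of_nonneg_right (hL x) (norm_nonneg _)) _
  have b2 : ∀ f : EucN N → EucN N, AEStronglyMeasurable f volume →
      eLpNorm (fun x => A x • f x) (ENNReal.ofReal p) volume
        ≤ ENNReal.ofReal L * eLpNorm f (ENNReal.ofReal p) volume := fun f _ =>
    eLpNorm_le_mul_eLpNorm_of_ae_le_mul (Eventually.of_forall fun x => by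
      rw [norm_smul]; exact mul_le_mul_of_nonneg_right (hL x) (norm_nonneg _)) _
  have b3 : ∀ f : EucN N → ℝ, AEStronglyMeasurable f volume →
      eLpNorm (fun x => f x • gradient A x) (ENNReal.ofReal p) volume
        ≤ ENNReal.ofReal L * eLpNorm f (ENNReal.ofReal p) volume := fun f _ =>
    eLpNorm_le_mul_eLpNorm_of_ae_le_mul (Eventually.of_forall fun x => by
      rw [norm_smul, mul_comm]; exact mul_le_mul_of_nonneg_right (hL' x) (norm_nonneg _)) _
  have mu : MemLp (fun x => A x * u x) (ENNReal.ofReal p) volume :=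
    ⟨cA.aestronglyMeasurable.mul hu.1, (b1 u hu.1).trans_lt
      (ENNReal.mul_lt_top ENNReal.ofReal_lt_top hu.2)⟩
  have mg : MemLp (fun x => A x • g x) (ENNReal.ofReal p) volume :=
    ⟨cA.aestronglyMeasurable.smul hg.1, (b2 g hg.1).trans_lt
      (ENNReal.mul_lt_top ENNReal.ofReal_lt_top hg.2)⟩
  have mug : MemLp (fun x => u x • gradient A x) (ENNReal.ofReal p) volume :=
    ⟨hu.1.smul cG.aestronglyMeasurable, (b3 u hu.1).trans_lt
      (ENNReal.mul_lt_top ENNReal.ofReal_lt_top hu.2)⟩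
  refine ⟨mu, mg.add mug, fun n x => A x * φ n x, fun n => ⟨hA.mul (hφ n).1,
    (hφ n).2.1.mul_left, ?_⟩, ?_, ?_⟩
  · refine subset_trans ?_ hsupp
    refine subset_inter (tsupport_mul_subset_left (g := φ n)) ?_
    exact (tsupport_mul_subset_right (f := A)).trans (hφ n).2.2
  · have t : Tendsto (fun n => ENNReal.ofReal L * eLpNorm (φ n - u) (ENNReal.ofReal p) volume)
        atTop (𝓝 0) := by
      have := ENNReal.Tendsto.const_mul h1 (Or.inr (ENNReal.ofReal_ne_top (r := L)))
      simpa using this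
    refine tendsto_of_tendsto_of_tendsto_of_le_of_le tendsto_const_nhds t
      (fun n => zero_le) fun n => ?_
    have := b1 (φ n - u) (((hφ n).memLp (ENNReal.ofReal p)).1.sub hu.1)
    refine le_trans (le_of_eq ?_) this
    congr 1; ext x; simp [mul_sub]
  · have t : Tendsto (fun n => ENNReal.ofReal L *
        eLpNorm (gradient (φ n) - g) (ENNReal.ofReal p) volume + ENNReal.ofReal L *
        eLpNorm (φ n - u) (ENNReal.ofReal p) volume) atTop (𝓝 0) := by
      have e1 := ENNReal.Tendsto.const_mul h1 (Or.inr (ENNReal.ofReal_ne_top (r := L)))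
      have e2 := ENNReal.Tendsto.const_mul h2 (Or.inr (ENNReal.ofReal_ne_top (r := L)))
      simpa using e2.add e1
    refine tendsto_of_tendsto_of_tendsto_of_le_of_le tendsto_const_nhds t
      (fun n => zero_le) fun n => ?_
    have m1 := ((hφ n).memLp (ENNReal.ofReal p)).1.sub hu.1
    have m2 := ((hφ n).memLp_grad (ENNReal.ofReal p)).1.sub hg.1
    have e : (gradient (fun x => A x * φ n x) - fun x => A x • g x + u x • gradient A x)
        = (fun x => A x • (gradient (φ n) - g) x) + fun x => (φ n - u) x • gradient A x := by
      ext1 x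
      simp only [Pi.sub_apply, Pi.add_apply]
      rw [grad_mul (hA.differentiable (by simp)).differentiableAt (hφ n).diff.differentiableAt]
      module
    rw [e]
    refine (eLpNorm_add_le (cA.aestronglyMeasurable.smul m2)
      (m1.smul cG.aestronglyMeasurable) hq).trans ?_
    exact add_le_add (b2 _ m2) (b3 _ m1)

/-- Dominated convergence for `eLpNorm`. -/
theorem eLpNorm_tendsto_zero_of_dom {N : ℕ} {p : ℝ} (hp : 1 ≤ p)
    {f : ℕ → EucN N → EucN N} {b : EucN N → ℝ}
    (hf : ∀ n, AEStronglyMeasurable (f n) volume) (hb : MemLp b (ENNReal.ofReal p) volume)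
    (hle : ∀ n, ∀ᵐ x, ‖f n x‖ ≤ b x)
    (hlim : ∀ᵐ x, Tendsto (fun n => f n x) atTop (𝓝 0)) :
    Tendsto (fun n => eLpNorm (f n) (ENNReal.ofReal p) volume) atTop (𝓝 0) := by
  have p0 : 0 < p := by linarith
  have hp0 : ENNReal.ofReal p ≠ 0 := by
    simp only [ne_eq, ENNReal.ofReal_eq_zero, not_le]; linarith
  have hr : (ENNReal.ofReal p).toReal = p := ENNReal.toReal_ofReal p0.le
  have key : Tendsto (fun n => ∫⁻ x, ‖f n x‖ₑ ^ p) atTop (𝓝 (∫⁻ _ : EucN N, 0)) := by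
    refine tendsto_lintegral_of_dominated_convergence' (fun x => ‖b x‖ₑ ^ p)
      (fun n => (hf n).enorm.pow_const p) (fun n => ?_) ?_ ?_
    · filter_upwards [hle n] with x hx
      refine ENNReal.rpow_le_rpow ?_ p0.le
      exact enorm_le_iff_norm_le.mpr (hx.trans (le_abs_self _))
    · have := hb.2
      rw [eLpNorm_lt_top_iff_lintegral_rpow_enorm_lt_top hp0 ENNReal.ofReal_ne_top, hr] at this
      exact this.ne
    · filter_upwards [hlim] with x hx
      have h1 : Tendsto (fun n => ‖f n x‖ₑ) atTop (𝓝 0) := by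
        have := (continuous_enorm.tendsto _).comp hx
        simpa [Function.comp_def] using this
      have h2 := (ENNReal.continuous_rpow_const (y := p)).tendsto 0 |>.comp h1
      simpa [Function.comp_def, ENNReal.zero_rpow_of_pos p0] using h2
  simp only [lintegral_zero] at key
  have h2 := (ENNReal.continuous_rpow_const (y := 1 / p)).tendsto 0 |>.comp key
  rw [ENNReal.zero_rpow_of_pos (by positivity)] at h2
  refine h2.congr fun n => ?_
  rw [eLpNorm_eq_lintegral_rpow_enorm_toReal hp0 ENNReal.ofReal_ne_top, hr]
  rfl

/-- Chain rule. -/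
theorem W0.comp {N : ℕ} {p : ℝ} (hp : 1 ≤ p) {Ω : Set (EucN N)}
    {u : EucN N → ℝ} {g : EucN N → EucN N} (h : W0 p Ω u g) {F : ℝ → ℝ}
    (hF : ContDiff ℝ (⊤ : ℕ∞) F) (hF0 : F 0 = 0) (hL : ∀ t, |deriv F t| ≤ 1) :
    W0 p Ω (fun x => F (u x)) (fun x => deriv F (u x) • g x) := by
  obtain ⟨φ, hφ, h1, h2, a1, a2⟩ := h.exists_ae hp
  obtain ⟨hu, hg, -⟩ := h
  have hq : 1 ≤ ENNReal.ofReal p := ENNReal.one_le_ofReal.mpr hp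
  have dF : Differentiable ℝ F := hF.differentiable (by simp)
  have cF' : Continuous (deriv F) := hF.continuous_deriv (by simp)
  have lip : ∀ s t, |F s - F t| ≤ |s - t| := fun s t => by
    have := Convex.norm_image_sub_le_of_norm_deriv_le (f := F) (C := 1) (s := univ)
      (fun x _ => dF x) (fun x _ => hL x) convex_univ (mem_univ t) (mem_univ s)
    simpa using this
  have mu : MemLp (fun x => F (u x)) (ENNReal.ofReal p) volume :=
    hu.mono (hF.continuous.comp_aestronglyMeasurable hu.1) (Eventually.of_forall fun x => by
      have := lip (u x) 0
      simpa [hF0] using this)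
  have mg : MemLp (fun x => deriv F (u x) • g x) (ENNReal.ofReal p) volume :=
    hg.mono ((cF'.comp_aestronglyMeasurable hu.1).smul hg.1) (Eventually.of_forall fun x => by
      rw [norm_smul]; exact mul_le_of_le_one_left (norm_nonneg _) (hL _))
  refine ⟨mu, mg, fun n x => F (φ n x), fun n => ⟨hF.comp (hφ n).1,
    (hφ n).2.1.comp_left hF0, ?_⟩, ?_, ?_⟩
  · refine subset_trans (closure_mono ?_) (hφ n).2.2
    intro x hx hx2
    exact hx (by simp only [hx2, hF0])
  · refine tendsto_of_tendsto_of_tendsto_of_le_of_le tendsto_const_nhds h1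
      (fun n => zero_le) fun n => ?_
    exact eLpNorm_mono fun x => lip _ _
  · have t1 : Tendsto (fun n => eLpNorm (fun x => (deriv F (φ n x) - deriv F (u x)) • g x)
        (ENNReal.ofReal p) volume) atTop (𝓝 0) := by
      refine eLpNorm_tendsto_zero_of_dom hp (b := fun x => 2 * ‖g x‖) (fun n => ?_)
        (hg.norm.const_mul 2) (fun n => ?_) ?_
      · exact ((cF'.comp_aestronglyMeasurable (hφ n).1.continuous.aestronglyMeasurable).sub
          (cF'.comp_aestronglyMeasurable hu.1)).smul hg.1
      · refine Eventually.of_forall fun x => ?_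
        rw [norm_smul]
        refine mul_le_mul_of_nonneg_right ?_ (norm_nonneg _)
        have e1 := norm_sub_le (deriv F (φ n x)) (deriv F (u x))
        have e2 := hL (φ n x)
        have e3 := hL (u x)
        simp only [Real.norm_eq_abs] at *
        linarith
      · filter_upwards [a1] with x hx
        have := ((cF'.tendsto _).comp hx).sub_const (deriv F (u x))
        rw [sub_self] at this
        have := this.smul_const (g x)
        simpa using this
    have t := h2.add t1
    rw [add_zero] at t
    refine tendsto_of_tendsto_of_tendsto_of_le_of_le tendsto_const_nhds t
      (fun n => zero_le) fun n => ?_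
    have m2 := ((hφ n).memLp_grad (ENNReal.ofReal p)).1.sub hg.1
    have mc := cF'.comp_aestronglyMeasurable ((hφ n).1.continuous.aestronglyMeasurable (μ := volume))
    have e : (gradient (fun x => F (φ n x)) - fun x => deriv F (u x) • g x)
        = (fun x => deriv F (φ n x) • (gradient (φ n) - g) x) +
          fun x => (deriv F (φ n x) - deriv F (u x)) • g x := by
      ext1 x
      simp only [Pi.sub_apply, Pi.add_apply]
      rw [grad_comp dF.differentiableAt (hφ n).diff.differentiableAt]
      module
    rw [e]
    refine (eLpNorm_add_le (mc.smul m2)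
      ((mc.sub (cF'.comp_aestronglyMeasurable hu.1)).smul hg.1) hq).trans ?_
    refine add_le_add (eLpNorm_mono fun x => ?_) le_rfl
    rw [Pi.smul_apply', norm_smul]; exact mul_le_of_le_one_left (norm_nonneg _) (hL _)


/-! ### Duality and the extended eigenvalue equation -/

theorem integrable_pow {N : ℕ} {V : Type*} [NormedAddCommGroup V] {p : ℝ} (hp : 1 < p)
    {f : EucN N → V} (hf : MemLp f (ENNReal.ofReal p) volume) :
    Integrable (fun x => ‖f x‖ ^ p) volume := by
  have := hf.integrable_norm_rpow (by simp; linarith) ENNReal.ofReal_ne_top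
  rwa [ENNReal.toReal_ofReal (by linarith)] at this

theorem tendsto_duality {N : ℕ} {V : Type*} [NormedAddCommGroup V] [InnerProductSpace ℝ V]
    {p : ℝ} (hp : 1 < p) {g h : EucN N → V} {hn : ℕ → EucN N → V}
    (hg : MemLp g (ENNReal.ofReal p) volume) (hh : MemLp h (ENNReal.ofReal p) volume)
    (hhn : ∀ n, MemLp (hn n) (ENNReal.ofReal p) volume)
    (hlim : Tendsto (fun n => eLpNorm (hn n - h) (ENNReal.ofReal p) volume) atTop (𝓝 0)) :
    Tendsto (fun n => ∫ x, ‖g x‖ ^ (p - 2) * ⟪g x, hn n x⟫) atTop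
      (𝓝 (∫ x, ‖g x‖ ^ (p - 2) * ⟪g x, h x⟫)) := by
  set q' : ℝ≥0∞ := ENNReal.ofReal (p / (p - 1)) with hq'
  have hconj : HolderConjugate q' (ENNReal.ofReal p) := by
    have : (p / (p - 1)).HolderConjugate p := (Real.HolderConjugate.conjExponent hp).symm
    exact this.ennrealOfReal
  set T : EucN N → V := fun x => ‖g x‖ ^ (p - 2) • g x with hT
  have mT : AEStronglyMeasurable T volume :=
    (hg.1.norm.aemeasurable.pow_const _).aestronglyMeasurable.smul hg.1
  have memT : MemLp T q' volume := by
    have h1 := hg.norm_rpow_div (ENNReal.ofReal (p - 1))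
    rw [← ENNReal.ofReal_div_of_pos (by linarith), ENNReal.toReal_ofReal (by linarith)] at h1
    refine h1.mono mT (Eventually.of_forall fun x => ?_)
    rw [hT]
    simp only [norm_smul]
    rw [Real.norm_of_nonneg (by positivity), Real.norm_of_nonneg (by positivity)]
    by_cases h0 : ‖g x‖ = 0
    · rw [h0]; simp; positivity
    · rw [show p - 1 = (p - 2) + 1 by ring, Real.rpow_add_one h0]
  have e : ∀ (f : EucN N → V) x, ‖g x‖ ^ (p - 2) * ⟪g x, f x⟫ = ⟪T x, f x⟫ := fun f x => by
    rw [hT]; simp only [real_inner_smul_left]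
  simp only [e]
  have hintg : ∀ f : EucN N → V, MemLp f (ENNReal.ofReal p) volume →
      Integrable (fun x => ⟪T x, f x⟫) volume := fun f hf => by
    rw [← memLp_one_iff_integrable]
    refine memT.of_bilin (q := ENNReal.ofReal p) (fun a b => ⟪a, b⟫) 1 hf
      (mT.inner hf.1) (Eventually.of_forall fun x => ?_)
    simpa using nnnorm_inner_le_nnnorm (𝕜 := ℝ) (T x) (f x)
  refine tendsto_integral_of_L1' _ (hintg h hh).1 (Eventually.of_forall fun n => hintg _ (hhn n)) ?_
  have t : Tendsto (fun n => eLpNorm T q' volume * eLpNorm (hn n - h) (ENNReal.ofReal p) volume)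
      atTop (𝓝 0) := by
    have := ENNReal.Tendsto.const_mul hlim (Or.inr memT.2.ne)
    simpa using this
  refine tendsto_of_tendsto_of_tendsto_of_le_of_le tendsto_const_nhds t
    (fun n => zero_le) fun n => ?_
  have := eLpNorm_le_eLpNorm_mul_eLpNorm_of_nnnorm (p := q') (q := ENNReal.ofReal p) (r := 1)
    mT ((hhn n).1.sub hh.1) (fun a b => ⟪a, b⟫) 1 (Eventually.of_forall fun x => by
      simpa using nnnorm_inner_le_nnnorm (𝕜 := ℝ) (T x) _)
  simp only [ENNReal.coe_one, one_mul] at this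
  refine le_trans (le_of_eq ?_) this
  congr 1; ext x; simp [inner_sub_right]

/-- Function-level notion of eigenfunction, tested against all of `W^{1,p}_0`. -/
def Eig {N : ℕ} (p : ℝ) (Ω : Set (EucN N)) (lam : ℝ) (u : EucN N → ℝ) (g : EucN N → EucN N) :
    Prop :=
  W0 p Ω u g ∧ ∀ φ h, W0 p Ω φ h →
    (∫ x, ‖g x‖ ^ (p - 2) * ⟪g x, h x⟫) = lam * ∫ x, |u x| ^ (p - 2) * u x * φ x

theorem eig_of_isEigenfunction {N : ℕ} {p : ℝ} (hp : 1 < p) {Ω : Set (EucN N)} {lam : ℝ}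
    {w : SobPair N (ENNReal.ofReal p)} (hw : IsEigenfunction N p hp.le Ω lam w) :
    Eig p Ω lam w.1 w.2 := by
  obtain ⟨h1, -, h3⟩ := hw
  have hW := W0_of_mem h1
  refine ⟨hW, fun φ h hφ => ?_⟩
  obtain ⟨mφ, mh, ψ, hψ, l1, l2⟩ := hφ
  have t1 := tendsto_duality hp hW.2.1 mh (fun n => (hψ n).memLp_grad _) l2
  have t2 := (tendsto_duality hp hW.1 mφ (fun n => (hψ n).memLp _) l1).const_mul lam
  refine tendsto_nhds_unique t1 ?_
  have e : ∀ f : EucN N → ℝ, (∫ x, ‖w.1 x‖ ^ (p - 2) * ⟪w.1 x, f x⟫)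
      = ∫ x, |w.1 x| ^ (p - 2) * w.1 x * f x := fun f => by
    congr 1; ext x; simp [mul_comm, mul_assoc]
  rw [e] at t2
  refine t2.congr fun n => ?_
  rw [e, h3 _ (hψ n)]

/-- Integrability of the pairing. -/
theorem integrable_pairing {N : ℕ} {V : Type*} [NormedAddCommGroup V] [InnerProductSpace ℝ V]
    {p : ℝ} (hp : 1 < p) {g h : EucN N → V}
    (hg : MemLp g (ENNReal.ofReal p) volume) (hh : MemLp h (ENNReal.ofReal p) volume) :
    Integrable (fun x => ‖g x‖ ^ (p - 2) * ⟪g x, h x⟫) volume := by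
  obtain ⟨C, hC, hy⟩ := aux_young hp one_pos
  refine ((integrable_pow hp hg).const_mul 1 |>.add ((integrable_pow hp hh).const_mul C)).mono'
    ((hg.1.norm.aemeasurable.pow_const _).aestronglyMeasurable.mul (hg.1.inner hh.1))
    (Eventually.of_forall fun x => ?_)
  refine le_trans ?_ (hy ‖g x‖ ‖h x‖ (norm_nonneg _) (norm_nonneg _))
  rw [norm_mul, Real.norm_of_nonneg (by positivity), mul_comm ‖h x‖]
  by_cases h0 : ‖g x‖ = 0
  · have : g x = 0 := norm_eq_zero.mp h0
    rw [this]; simp; positivity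
  · rw [show p - 1 = (p - 2) + 1 by ring, Real.rpow_add_one h0, mul_assoc]
    exact mul_le_mul_of_nonneg_left (norm_inner_le_norm _ _) (by positivity)

/-- Poincare inequality with `lambda1p`. -/
theorem poincare {N : ℕ} {p : ℝ} (hp : 1 < p) {Ω : Set (EucN N)} {μ : ℝ}
    (hμ : ENNReal.ofReal μ ≤ lambda1p N p hp.le Ω) {u : EucN N → ℝ} {g : EucN N → EucN N}
    (h : W0 p Ω u g) : μ * ∫ x, |u x| ^ p ≤ ∫ x, ‖g x‖ ^ p := by
  have p0 : 0 < p := by linarith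
  have hI : 0 ≤ ∫ x, |u x| ^ p := integral_nonneg fun x => by positivity
  rcases hI.eq_or_lt with h0 | h0
  · rw [← h0, mul_zero]
    exact integral_nonneg fun x => by positivity
  set s := ∫ x, |u x| ^ p with hs
  set c : ℝ := s ^ (-(1 / p)) with hc
  have c0 : 0 < c := by positivity
  have hcp : c ^ p = s⁻¹ := by
    rw [hc, ← Real.rpow_mul hI, ← Real.rpow_neg_one]; congr 1; field_simp
  have hW := h.mul hp.le (Ω' := Ω) (A := fun _ => c) contDiff_const (L := c)
    (fun x => (abs_of_pos c0).le) (fun x => by rw [gradient_fun_const]; simpa using c0.le)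
    inter_subset_right
  have hm := mem_of_W0 (hp := hp.le) hW
  have e1 : (∫ x, |(hW.1.toLp _) x| ^ p) = 1 := by
    have : (∫ x, |(hW.1.toLp _) x| ^ p) = ∫ x, c ^ p * |u x| ^ p := by
      refine integral_congr_ae ?_
      filter_upwards [hW.1.coeFn_toLp] with x hx
      rw [hx, abs_mul, abs_of_pos c0, Real.mul_rpow c0.le (abs_nonneg _)]
    rw [this, integral_const_mul, hcp, ← hs, inv_mul_cancel₀ h0.ne']
  have e2 : (∫ x, ‖(hW.2.1.toLp _) x‖ ^ p) = s⁻¹ * ∫ x, ‖g x‖ ^ p := by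
    have : (∫ x, ‖(hW.2.1.toLp _) x‖ ^ p) = ∫ x, c ^ p * ‖g x‖ ^ p := by
      refine integral_congr_ae ?_
      filter_upwards [hW.2.1.coeFn_toLp] with x hx
      rw [hx, gradient_fun_const, smul_zero, add_zero, norm_smul, Real.norm_of_nonneg c0.le,
        Real.mul_rpow c0.le (norm_nonneg _)]
    rw [this, integral_const_mul, hcp]
  have h2 : lambda1p N p hp.le Ω ≤ ENNReal.ofReal (∫ x, ‖(hW.2.1.toLp _) x‖ ^ p) :=
    sInf_le ⟨_, hm, e1, rfl⟩
  have h3 := hμ.trans h2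
  rw [e2, ENNReal.ofReal_le_ofReal_iff (mul_nonneg (by positivity)
    (integral_nonneg fun x => by positivity))] at h3
  rw [inv_mul_eq_div, le_div_iff₀ h0] at h3
  exact h3


/-! ### Sobolev inequality -/

theorem sob_one_zero : ∃ C : NNReal, ∀ Φ : EucN 0 → ℝ,
    (∫⁻ x, ‖Φ x‖ₑ ^ (2 : ℝ)) ^ (1 / 2 : ℝ) ≤ C * ∫⁻ x, ‖Φ x‖ₑ := by
  have hfin : (volume (univ : Set (EucN 0))) ≠ ⊤ := (isCompact_univ.measure_lt_top).ne
  have hpos : (volume (univ : Set (EucN 0))) ≠ 0 :=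
    (isOpen_univ.measure_pos volume univ_nonempty).ne'
  set c := volume (univ : Set (EucN 0)) with hc
  refine ⟨(c ^ (1 / 2 : ℝ) * c⁻¹).toNNReal, fun Φ => ?_⟩
  rw [ENNReal.coe_toNNReal (ENNReal.mul_ne_top
    (ENNReal.rpow_ne_top_of_nonneg (by norm_num) hfin) (ENNReal.inv_ne_top.mpr hpos))]
  rw [lintegral_unique, lintegral_unique, ← hc, ENNReal.mul_rpow_of_nonneg _ _ (by norm_num),
    ← ENNReal.rpow_mul]
  norm_num
  have key : ∀ a : ℝ≥0∞, a * c ^ (1 / 2 : ℝ) ≤ c ^ (1 / 2 : ℝ) * c⁻¹ * (a * c) := fun a => by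
    have : c ^ (1 / 2 : ℝ) * c⁻¹ * (a * c) = c ^ (1 / 2 : ℝ) * a * (c⁻¹ * c) := by ring
    rw [this, ENNReal.inv_mul_cancel hpos hfin, mul_one, mul_comm]
  exact key _

theorem sob_one_one {Φ : EucN 1 → ℝ} (hΦ : ContDiff ℝ 1 Φ) (hc : HasCompactSupport Φ) :
    (∫⁻ x, ‖Φ x‖ₑ ^ (2 : ℝ)) ^ (1 / 2 : ℝ) ≤ (∫⁻ x, ‖Φ x‖ₑ) + ∫⁻ x, ‖fderiv ℝ Φ x‖ₑ := by
  let e : ℝ ≃ₗᵢ[ℝ] EucN 1 := (OrthonormalBasis.singleton (Fin 1) ℝ).repr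
  have he : MeasurePreserving e volume volume := e.measurePreserving
  have hemb : MeasurableEmbedding e := e.toHomeomorph.measurableEmbedding
  have hb : ∀ x, ‖Φ x‖ₑ ≤ ∫⁻ y, ‖fderiv ℝ Φ y‖ₑ := by
    intro x
    obtain ⟨t, rfl⟩ := e.surjective x
    have c1 : ContDiff ℝ 1 (fun s => Φ (e s)) := hΦ.comp e.contDiff
    have c2 : HasCompactSupport (fun s => Φ (e s)) :=
      hc.comp_homeomorph e.toHomeomorph
    refine (c2.enorm_le_lintegral_Ici_deriv c1 t).trans ?_
    rw [← he.lintegral_comp_emb hemb]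
    refine (setLIntegral_le_lintegral _ _).trans (lintegral_mono fun s => ?_)
    have hd : HasDerivAt (fun s => Φ (e s)) (fderiv ℝ Φ (e s) (e 1)) s := by
      have h1 := (hΦ.differentiable (by simp) (e s)).hasFDerivAt
      have h2 : HasDerivAt (fun s => e s) (e 1) s := by
        have := e.toContinuousLinearEquiv.toContinuousLinearMap.hasDerivAt (x := s)
        exact this
      exact h1.comp_hasDerivAt s h2
    rw [hd.deriv]
    refine enorm_le_iff_norm_le.mpr ((ContinuousLinearMap.le_opNorm _ _).trans ?_)
    rw [e.norm_map]; simp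
  set I := ∫⁻ x, ‖Φ x‖ₑ
  set D := ∫⁻ x, ‖fderiv ℝ Φ x‖ₑ
  have h1 : ∫⁻ x, ‖Φ x‖ₑ ^ (2 : ℝ) ≤ (I + D) ^ (2 : ℝ) := by
    calc ∫⁻ x, ‖Φ x‖ₑ ^ (2 : ℝ) ≤ ∫⁻ x, D * ‖Φ x‖ₑ := by
          refine lintegral_mono fun x => ?_
          rw [ENNReal.rpow_two, sq]
          exact mul_le_mul_left (hb x) _
      _ = D * I := lintegral_const_mul _ hΦ.continuous.enorm.measurable
      _ ≤ (I + D) * (I + D) := mul_le_mul' le_add_self le_self_add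
      _ = _ := by rw [ENNReal.rpow_two, sq]
  refine (ENNReal.rpow_le_rpow h1 (by norm_num)).trans ?_
  rw [← ENNReal.rpow_mul]; norm_num

theorem sob_one (N : ℕ) : ∃ χ : ℝ, 1 < χ ∧ ∃ C : NNReal, ∀ Φ : EucN N → ℝ, ContDiff ℝ 1 Φ →
    HasCompactSupport Φ →
    (∫⁻ x, ‖Φ x‖ₑ ^ χ) ^ (1 / χ) ≤ C * ((∫⁻ x, ‖Φ x‖ₑ) + ∫⁻ x, ‖fderiv ℝ Φ x‖ₑ) := by
  rcases N with _ | _ | n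
  · obtain ⟨C, hC⟩ := sob_one_zero
    exact ⟨2, by norm_num, C, fun Φ _ _ => (hC Φ).trans (mul_le_mul_right le_self_add _)⟩
  · exact ⟨2, by norm_num, 1, fun Φ h1 h2 => by simpa using sob_one_one h1 h2⟩
  · set m : ℝ := ((n + 1 + 1 : ℕ) : ℝ) with hm
    have hm1 : 1 < m := by
      rw [hm]; push_cast; have : (0:ℝ) ≤ n := n.cast_nonneg
      linarith
    have hconj := Real.HolderConjugate.conjExponent hm1
    set χ := m.conjExponent
    have hχ : 1 < χ := hconj.symm.lt
    refine ⟨χ, hχ, (lintegralPowLePowLIntegralFDerivConst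
      (volume : Measure (EucN (n + 1 + 1))) χ) ^ (1 / χ), fun Φ h1 h2 => ?_⟩
    have := lintegral_pow_le_pow_lintegral_fderiv (volume : Measure (EucN (n + 1 + 1))) h1 h2
      (p := χ) (by simpa [hm] using hconj)
    have := ENNReal.rpow_le_rpow this (show 0 ≤ 1 / χ by positivity)
    rw [ENNReal.mul_rpow_of_nonneg _ _ (by positivity), ← ENNReal.rpow_mul,
      mul_one_div_cancel (by positivity), ENNReal.rpow_one,
      ← ENNReal.coe_rpow_of_nonneg _ (by positivity)] at this
    exact this.trans (mul_le_mul_right le_add_self _)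

theorem sob_test (N : ℕ) {p : ℝ} (hp : 1 < p) : ∃ χ : ℝ, 1 < χ ∧ ∃ C : NNReal,
    ∀ (Ω : Set (EucN N)) (φ : EucN N → ℝ), IsTestFun Ω φ →
    (∫⁻ x, ‖φ x‖ₑ ^ (p * χ)) ^ (1 / χ)
      ≤ C * ((∫⁻ x, ‖φ x‖ₑ ^ p) + ∫⁻ x, ‖gradient φ x‖ₑ ^ p) := by
  obtain ⟨χ, hχ, C, hC⟩ := sob_one N
  obtain ⟨C2, hC2, hy⟩ := aux_young hp one_pos
  have p0 : 0 < p := by linarith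
  refine ⟨χ, hχ, C * (1 + Real.toNNReal (p * (1 + C2))), fun Ω φ hφ => ?_⟩
  have c1 : ContDiff ℝ 1 (fun x => ‖φ x‖ ^ p) := (hφ.1.of_le (by exact_mod_cast le_top)).norm_rpow hp
  have c2 : HasCompactSupport (fun x => ‖φ x‖ ^ p) :=
    hφ.2.1.comp_left (g := fun t : ℝ => ‖t‖ ^ p) (by simp [Real.zero_rpow p0.ne'])
  have h := hC _ c1 c2
  have e1 : ∀ x, ‖(‖φ x‖ ^ p : ℝ)‖ₑ = ‖φ x‖ₑ ^ p := fun x => by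
    rw [Real.enorm_of_nonneg (by positivity), ← ENNReal.ofReal_rpow_of_nonneg (norm_nonneg _) p0.le,
      ofReal_norm]
  simp only [e1, ← ENNReal.rpow_mul] at h
  refine h.trans ?_
  rw [ENNReal.coe_mul, mul_assoc]
  refine mul_le_mul_right ?_ _
  set I := ∫⁻ x, ‖φ x‖ₑ ^ p
  set J := ∫⁻ x, ‖gradient φ x‖ₑ ^ p
  have hd : ∫⁻ x, ‖fderiv ℝ (fun x => ‖φ x‖ ^ p) x‖ₑ ≤ ENNReal.ofReal (p * (1 + C2)) * (I + J) := by
    have mI : Measurable (fun x => ‖φ x‖ₑ ^ p) := hφ.1.continuous.enorm.measurable.pow_const p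
    have mJ : Measurable (fun x => ‖gradient φ x‖ₑ ^ p) :=
      (continuous_grad hφ.1).enorm.measurable.pow_const p
    rw [← lintegral_add_left mI, ← lintegral_const_mul _ (show Measurable (fun x => ‖φ x‖ₑ ^ p + ‖gradient φ x‖ₑ ^ p) from mI.add mJ)]
    refine lintegral_mono fun x => ?_
    have k1 := norm_fderiv_norm_rpow_le hφ.diff (x := x) hp
    have k2 := hy ‖φ x‖ ‖gradient φ x‖ (norm_nonneg _) (norm_nonneg _)
    have k3 : ‖fderiv ℝ (fun x => ‖φ x‖ ^ p) x‖
        ≤ p * (1 + C2) * (‖φ x‖ ^ p + ‖gradient φ x‖ ^ p) := by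
      refine k1.trans ?_
      rw [← norm_grad]
      have a1 : 0 ≤ ‖φ x‖ ^ p := by positivity
      have a2 : 0 ≤ ‖gradient φ x‖ ^ p := by positivity
      have : p * ‖φ x‖ ^ (p - 1) * ‖gradient φ x‖ = p * (‖gradient φ x‖ * ‖φ x‖ ^ (p - 1)) := by ring
      rw [this, mul_assoc p (1 + C2)]
      refine mul_le_mul_of_nonneg_left (k2.trans ?_) p0.le
      nlinarith [mul_nonneg hC2 a1]
    rw [← ofReal_norm]
    refine (ENNReal.ofReal_le_ofReal k3).trans (le_of_eq ?_)
    rw [ENNReal.ofReal_mul (by positivity), ENNReal.ofReal_add (by positivity) (by positivity),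
      ← ENNReal.ofReal_rpow_of_nonneg (norm_nonneg _) p0.le,
      ← ENNReal.ofReal_rpow_of_nonneg (norm_nonneg _) p0.le,
      ofReal_norm, ofReal_norm]
  rw [ENNReal.coe_add, ENNReal.coe_one, add_mul, one_mul]
  exact add_le_add le_self_add hd

theorem lintegral_pow_eq {N : ℕ} {V : Type*} [NormedAddCommGroup V] {p : ℝ} (hp : 1 < p)
    (f : EucN N → V) :
    ∫⁻ x, ‖f x‖ₑ ^ p = eLpNorm f (ENNReal.ofReal p) volume ^ p := by
  have p0 : 0 < p := by linarith
  rw [eLpNorm_eq_lintegral_rpow_enorm_toReal (by simp; linarith) ENNReal.ofReal_ne_top,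
    ENNReal.toReal_ofReal p0.le, ← ENNReal.rpow_mul, one_div_mul_cancel p0.ne', ENNReal.rpow_one]

theorem sobolev (N : ℕ) {p : ℝ} (hp : 1 < p) : ∃ χ : ℝ, 1 < χ ∧ ∃ C : NNReal,
    ∀ (Ω : Set (EucN N)) (u : EucN N → ℝ) (g : EucN N → EucN N), W0 p Ω u g →
    (∫⁻ x, ‖u x‖ₑ ^ (p * χ)) ^ (1 / χ)
      ≤ C * ((∫⁻ x, ‖u x‖ₑ ^ p) + ∫⁻ x, ‖g x‖ₑ ^ p) := by
  obtain ⟨χ, hχ, C, hC⟩ := sob_test N hp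
  have p0 : 0 < p := by linarith
  have χ0 : 0 < χ := by linarith
  refine ⟨χ, hχ, C, fun Ω u g h => ?_⟩
  obtain ⟨φ, hφ, h1, h2, a1, -⟩ := h.exists_ae hp.le
  obtain ⟨hu, hg, -⟩ := h
  have hq : 1 ≤ ENNReal.ofReal p := ENNReal.one_le_ofReal.mpr hp.le
  rw [lintegral_pow_eq hp, lintegral_pow_eq hp]
  set U := eLpNorm u (ENNReal.ofReal p) volume
  set G := eLpNorm g (ENNReal.ofReal p) volume
  set B : ℕ → ℝ≥0∞ := fun n => (C * ((eLpNorm (φ n - u) (ENNReal.ofReal p) volume + U) ^ p +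
    (eLpNorm (gradient (φ n) - g) (ENNReal.ofReal p) volume + G) ^ p)) ^ χ with hB
  have tB : Tendsto B atTop (𝓝 ((C * (U ^ p + G ^ p)) ^ χ)) := by
    have s1 := (ENNReal.continuous_rpow_const (y := p)).tendsto _ |>.comp (h1.add_const U)
    have s2 := (ENNReal.continuous_rpow_const (y := p)).tendsto _ |>.comp (h2.add_const G)
    have s3 := ENNReal.Tendsto.const_mul (s1.add s2) (Or.inr (ENNReal.coe_ne_top (r := C)))
    have s4 := (ENNReal.continuous_rpow_const (y := χ)).tendsto _ |>.comp s3
    simpa [Function.comp_def] using s4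
  have key : ∫⁻ x, ‖u x‖ₑ ^ (p * χ) ≤ (C * (U ^ p + G ^ p)) ^ χ := by
    have f1 : ∫⁻ x, ‖u x‖ₑ ^ (p * χ) = ∫⁻ x, liminf (fun n => ‖φ n x‖ₑ ^ (p * χ)) atTop := by
      refine lintegral_congr_ae ?_
      filter_upwards [a1] with x hx
      have := (ENNReal.continuous_rpow_const (y := p * χ)).tendsto _ |>.comp
        ((continuous_enorm.tendsto _).comp hx)
      exact this.liminf_eq.symm
    rw [f1]
    refine (lintegral_liminf_le fun n =>
      (hφ n).1.continuous.enorm.measurable.pow_const _).trans ?_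
    rw [← tB.liminf_eq]
    refine liminf_le_liminf (Eventually.of_forall fun n => ?_)
    have k := hC Ω (φ n) (hφ n)
    rw [lintegral_pow_eq hp, lintegral_pow_eq hp] at k
    have k2 := ENNReal.rpow_le_rpow k χ0.le
    rw [← ENNReal.rpow_mul, one_div_mul_cancel χ0.ne', ENNReal.rpow_one] at k2
    refine k2.trans ?_
    simp only [hB]
    have n1 : eLpNorm (φ n) (ENNReal.ofReal p) volume
        ≤ eLpNorm (φ n - u) (ENNReal.ofReal p) volume + U := by
      have := eLpNorm_add_le (((hφ n).memLp (ENNReal.ofReal p)).1.sub hu.1) hu.1 hq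
      simpa using this
    have n2 : eLpNorm (gradient (φ n)) (ENNReal.ofReal p) volume
        ≤ eLpNorm (gradient (φ n) - g) (ENNReal.ofReal p) volume + G := by
      have := eLpNorm_add_le (((hφ n).memLp_grad (ENNReal.ofReal p)).1.sub hg.1) hg.1 hq
      simpa using this
    gcongr
  have := ENNReal.rpow_le_rpow key (show 0 ≤ 1 / χ by positivity)
  rwa [← ENNReal.rpow_mul _ χ, mul_one_div_cancel χ0.ne', ENNReal.rpow_one] at this


/-! ### Agmon type estimate -/

theorem rpow_sub_two_mul {p : ℝ} (hp : 1 < p) {t : ℝ} (ht : 0 ≤ t) :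
    t ^ (p - 2) * t = t ^ (p - 1) := by
  rcases ht.eq_or_lt with h | h
  · rw [← h, mul_zero, Real.zero_rpow (by linarith)]
  · rw [show p - 1 = (p - 2) + 1 by ring, Real.rpow_add_one h.ne']

theorem rpow_sub_one_mul {p : ℝ} (hp : 1 < p) {t : ℝ} (ht : 0 ≤ t) :
    t ^ (p - 1) * t = t ^ p := by
  rcases ht.eq_or_lt with h | h
  · rw [← h, mul_zero, Real.zero_rpow (by linarith)]
  · rw [← Real.rpow_add_one h.ne']; congr 1; ring

theorem grad_rpow {N : ℕ} {p : ℝ} {H : EucN N → ℝ} {x : EucN N}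
    (hH : DifferentiableAt ℝ H x) (h : H x ≠ 0 ∨ 1 ≤ p) :
    gradient (fun y => H y ^ p) x = (p * H x ^ (p - 1)) • gradient H x := by
  have hd : HasDerivAt (fun t : ℝ => t ^ p) (p * H x ^ (p - 1)) (H x) :=
    Real.hasDerivAt_rpow_const h
  rw [grad_comp (F := fun t : ℝ => t ^ p) hd.differentiableAt hH, hd.deriv]

theorem agmon {N : ℕ} {p : ℝ} (hp : 1 < p) {Ω Ω' : Set (EucN N)} {lam μ ε C : ℝ}
    {u : EucN N → ℝ} {g : EucN N → EucN N} (hE : Eig p Ω lam u g)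
    (hC : ∀ (a b : EucN N), ‖a + b‖ ^ p ≤
      (1 + ε) * (‖a‖ ^ p + p * (‖a‖ ^ (p - 2) * ⟪a, b⟫)) + C * ‖b‖ ^ p)
    (hμ : ENNReal.ofReal μ ≤ lambda1p N p hp.le Ω')
    {H : EucN N → ℝ} (hH : ContDiff ℝ (⊤ : ℕ∞) H)
    (hHp : ContDiff ℝ (⊤ : ℕ∞) (fun x => H x ^ p)) (H0 : ∀ x, 0 ≤ H x)
    {L : ℝ} (hL : ∀ x, H x ≤ L) (hL' : ∀ x, ‖gradient H x‖ ≤ L)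
    (hsupp : tsupport H ∩ Ω ⊆ Ω') :
    μ * ∫ x, |H x * u x| ^ p ≤
      (1 + ε) * (lam * ∫ x, |H x * u x| ^ p) + C * ∫ x, ‖u x • gradient H x‖ ^ p := by
  have p0 : 0 < p := by linarith
  have L0 : 0 ≤ L := (norm_nonneg _).trans (hL' 0)
  obtain ⟨hW, hT⟩ := hE
  have dH : Differentiable ℝ H := hH.differentiable (by simp)
  have g1 := hW.mul hp.le hH (L := L) (fun x => by rw [abs_of_nonneg (H0 x)]; exact hL x) hL' hsupp
  have P := poincare hp hμ g1
  have gHp : ∀ x, gradient (fun y => H y ^ p) x = (p * H x ^ (p - 1)) • gradient H x :=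
    fun x => grad_rpow (dH x) (Or.inr hp.le)
  have g2 := hW.mul hp.le (Ω' := Ω) hHp (L := max (L ^ p) (p * L ^ (p - 1) * L))
    (fun x => by
      rw [abs_of_nonneg (Real.rpow_nonneg (H0 x) _)]
      exact (Real.rpow_le_rpow (H0 x) (hL x) p0.le).trans (le_max_left _ _))
    (fun x => by
      have := Real.rpow_nonneg (H0 x) (p - 1)
      rw [gHp, norm_smul, Real.norm_of_nonneg (by positivity)]
      refine le_trans ?_ (le_max_right _ _)
      have h2 := Real.rpow_le_rpow (H0 x) (hL x) (show 0 ≤ p - 1 by linarith)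
      have h3 := hL' x
      gcongr) inter_subset_right
  have T := hT _ _ g2
  have cG : Continuous (gradient H) := continuous_grad hH
  have mb : MemLp (fun x => u x • gradient H x) (ENNReal.ofReal p) volume := by
    refine (hW.1.norm.const_mul L).mono (hW.1.1.smul cG.aestronglyMeasurable)
      (Eventually.of_forall fun x => ?_)
    rw [norm_smul, norm_mul, norm_norm, Real.norm_of_nonneg L0, mul_comm]
    exact mul_le_mul_of_nonneg_right (hL' x) (norm_nonneg _)
  have e1 : ∀ x, ‖H x • g x‖ ^ p + p * (‖H x • g x‖ ^ (p - 2) * ⟪H x • g x, u x • gradient H x⟫)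
      = ‖g x‖ ^ (p - 2) * ⟪g x, (H x ^ p) • g x + u x • gradient (fun y => H y ^ p) x⟫ := by
    intro x
    rw [gHp, norm_smul, Real.norm_of_nonneg (H0 x), Real.mul_rpow (H0 x) (norm_nonneg _),
      Real.mul_rpow (H0 x) (norm_nonneg _), ← aux_norm_pow_inner hp (g x), ← rpow_sub_two_mul hp (H0 x)]
    simp only [inner_add_right, real_inner_smul_left, real_inner_smul_right]
    ring
  have e2 : (∫ x, |u x| ^ (p - 2) * u x * (H x ^ p * u x)) = ∫ x, |H x * u x| ^ p := by
    congr 1; ext x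
    rw [abs_mul, abs_of_nonneg (H0 x), Real.mul_rpow (H0 x) (abs_nonneg _),
      ← rpow_sub_one_mul hp (abs_nonneg (u x)), ← rpow_sub_two_mul hp (abs_nonneg (u x))]
    have := abs_mul_abs_self (u x)
    calc _ = |u x| ^ (p - 2) * (u x * u x) * H x ^ p := by ring
      _ = _ := by rw [← this]; ring
  rw [e2] at T
  have hintg := integrable_pairing hp hW.2.1 g2.2.1
  have hintb := integrable_pow hp mb
  calc _ ≤ _ := P
    _ ≤ ∫ x, ((1 + ε) * (‖g x‖ ^ (p - 2) *
          ⟪g x, (H x ^ p) • g x + u x • gradient (fun y => H y ^ p) x⟫)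
          + C * ‖u x • gradient H x‖ ^ p) := by
        refine integral_mono (integrable_pow hp g1.2.1)
          ((hintg.const_mul _).add (hintb.const_mul _)) fun x => ?_
        have := hC (H x • g x) (u x • gradient H x)
        rw [e1] at this
        exact this
    _ = _ := by
        rw [integral_add (hintg.const_mul _) (hintb.const_mul _), integral_const_mul,
          integral_const_mul, T]


/-! ### Exponential weights and cutoff -/

/-- The function `sqrt (1 + |x|^2)`. -/
def jap {N : ℕ} (x : EucN N) : ℝ := Real.sqrt (1 + ‖x‖ ^ 2)

theorem jap_ge_one {N : ℕ} (x : EucN N) : 1 ≤ jap x := by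
  rw [jap, Real.one_le_sqrt]; nlinarith [sq_nonneg ‖x‖]

theorem jap_pos {N : ℕ} (x : EucN N) : 0 < jap x := zero_lt_one.trans_le (jap_ge_one x)

theorem norm_le_jap {N : ℕ} (x : EucN N) : ‖x‖ ≤ jap x := by
  rw [jap]; apply Real.le_sqrt_of_sq_le; linarith

theorem jap_le {N : ℕ} (x : EucN N) : jap x ≤ 1 + ‖x‖ := by
  rw [jap, Real.sqrt_le_left (by positivity)]; nlinarith [norm_nonneg x]

theorem jap_contDiff {N : ℕ} : ContDiff ℝ (⊤ : ℕ∞) (jap (N := N)) :=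
  (contDiff_const.add (contDiff_norm_sq ℝ)).sqrt fun x => by positivity

theorem norm_grad_norm_sq {N : ℕ} (x : EucN N) :
    ‖gradient (fun y : EucN N => ‖y‖ ^ 2) x‖ = 2 * ‖x‖ := by
  rw [norm_grad, (hasStrictFDerivAt_norm_sq x).hasFDerivAt.fderiv]
  rw [two_smul, ← two_smul ℝ, norm_smul, innerSL_apply_norm]; simp

theorem norm_grad_jap {N : ℕ} (x : EucN N) : ‖gradient (jap (N := N)) x‖ ≤ 1 := by
  have h1 : HasDerivAt (fun s : ℝ => Real.sqrt (1 + s)) (1 / (2 * Real.sqrt (1 + ‖x‖ ^ 2))) (‖x‖ ^ 2) := by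
    have := ((hasDerivAt_id (‖x‖ ^ 2)).const_add 1).sqrt (by simp only [id]; positivity)
    simpa using this
  have h2 := grad_comp (F := fun s : ℝ => Real.sqrt (1 + s)) (f := fun y : EucN N => ‖y‖ ^ 2)
    (x := x) h1.differentiableAt ((contDiff_norm_sq ℝ (n := 1)).differentiable (by simp) x)
  have h3 : gradient (jap (N := N)) x = gradient (fun y => Real.sqrt (1 + ‖y‖ ^ 2)) x := rfl
  rw [h3, h2, h1.deriv, norm_smul, norm_grad_norm_sq]
  change ‖1 / (2 * jap x)‖ * (2 * ‖x‖) ≤ 1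
  have := jap_pos x
  have := norm_le_jap x
  rw [Real.norm_of_nonneg (by positivity), one_div, ← div_eq_inv_mul, div_le_one (by positivity)]
  linarith

/-- Bounded approximation of `jap`. -/
def psi {N : ℕ} (δ : ℝ) (x : EucN N) : ℝ := jap x / (1 + δ * jap x)

theorem psi_contDiff {N : ℕ} {δ : ℝ} (hδ : 0 < δ) : ContDiff ℝ (⊤ : ℕ∞) (psi (N := N) δ) :=
  jap_contDiff.div (contDiff_const.add (contDiff_const.mul jap_contDiff)) fun x => by
    have := jap_pos x
    positivity

theorem psi_nonneg {N : ℕ} {δ : ℝ} (hδ : 0 < δ) (x : EucN N) : 0 ≤ psi δ x := by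
  have := jap_pos x
  unfold psi; positivity

theorem psi_le_inv {N : ℕ} {δ : ℝ} (hδ : 0 < δ) (x : EucN N) : psi δ x ≤ δ⁻¹ := by
  have := jap_pos x
  unfold psi
  rw [div_le_iff₀ (by positivity), mul_add, inv_mul_cancel_left₀ hδ.ne']
  have : 0 < δ⁻¹ := by positivity
  linarith

theorem psi_le {N : ℕ} {δ : ℝ} (hδ : 0 < δ) (x : EucN N) : psi δ x ≤ 1 + ‖x‖ := by
  refine le_trans ?_ (jap_le x)
  have := jap_pos x
  unfold psi
  exact div_le_self this.le (by have : 0 < δ * jap x := by positivity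
                                linarith)

theorem norm_grad_psi {N : ℕ} {δ : ℝ} (hδ : 0 < δ) (x : EucN N) : ‖gradient (psi δ) x‖ ≤ 1 := by
  have j0 := jap_pos x
  have hj : 0 < δ * jap x := by positivity
  have h1 : HasDerivAt (fun t : ℝ => t / (1 + δ * t))
      ((1 * (1 + δ * jap x) - jap x * (δ * 1)) / (1 + δ * jap x) ^ 2) (jap x) :=
    (hasDerivAt_id (jap x)).div (((hasDerivAt_id (jap x)).const_mul δ).const_add 1) (by positivity)
  have h2 := grad_comp (F := fun t : ℝ => t / (1 + δ * t)) (f := jap (N := N))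
    (x := x) h1.differentiableAt (jap_contDiff.differentiable (by simp) x)
  have h3 : gradient (psi (N := N) δ) x = gradient (fun y => jap y / (1 + δ * jap y)) x := rfl
  rw [h3, h2, h1.deriv, norm_smul]
  have e : (1 * (1 + δ * jap x) - jap x * (δ * 1)) / (1 + δ * jap x) ^ 2 = 1 / (1 + δ * jap x) ^ 2 := by
    congr 1; ring
  rw [e, Real.norm_of_nonneg (by positivity)]
  refine mul_le_one₀ ?_ (norm_nonneg _) (norm_grad_jap x)
  rw [div_le_one (by positivity)]
  nlinarith

theorem psi_tendsto {N : ℕ} (x : EucN N) :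
    Tendsto (fun n : ℕ => psi (1 / ((n : ℝ) + 1)) x) atTop (𝓝 (jap x)) := by
  have h := ((tendsto_one_div_add_atTop_nhds_zero_nat (𝕜 := ℝ)).mul_const (jap x)).const_add 1
  have := (tendsto_const_nhds (x := jap x)).div h (by simp)
  rw [zero_mul, add_zero, div_one] at this
  exact this

/-- Exponential weight. -/
def GW {N : ℕ} (α δ : ℝ) (x : EucN N) : ℝ := Real.exp (α * psi δ x)

theorem GW_contDiff {N : ℕ} {α δ : ℝ} (hδ : 0 < δ) : ContDiff ℝ (⊤ : ℕ∞) (GW (N := N) α δ) :=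
  (contDiff_const.mul (psi_contDiff hδ)).exp

theorem GW_pos {N : ℕ} (α δ : ℝ) (x : EucN N) : 0 < GW α δ x := Real.exp_pos _

theorem GW_ge_one {N : ℕ} {α δ : ℝ} (hα : 0 < α) (hδ : 0 < δ) (x : EucN N) : 1 ≤ GW α δ x := by
  rw [GW, Real.one_le_exp_iff]
  exact mul_nonneg hα.le (psi_nonneg hδ x)

theorem GW_le {N : ℕ} {α δ : ℝ} (hα : 0 < α) (hδ : 0 < δ) (x : EucN N) :
    GW α δ x ≤ Real.exp (α * δ⁻¹) :=
  Real.exp_le_exp.mpr (mul_le_mul_of_nonneg_left (psi_le_inv hδ x) hα.le)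

theorem GW_le_norm {N : ℕ} {α δ : ℝ} (hα : 0 < α) (hδ : 0 < δ) (x : EucN N) :
    GW α δ x ≤ Real.exp (α * (1 + ‖x‖)) :=
  Real.exp_le_exp.mpr (mul_le_mul_of_nonneg_left (psi_le hδ x) hα.le)

theorem norm_grad_GW {N : ℕ} {α δ : ℝ} (hα : 0 < α) (hδ : 0 < δ) (x : EucN N) :
    ‖gradient (GW α δ) x‖ ≤ α * GW α δ x := by
  have h1 : HasDerivAt (fun t : ℝ => Real.exp (α * t)) (Real.exp (α * psi δ x) * (α * 1)) (psi δ x) :=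
    ((hasDerivAt_id (psi δ x)).const_mul α).exp
  have h2 := grad_comp (F := fun t : ℝ => Real.exp (α * t)) (f := psi (N := N) δ)
    (x := x) h1.differentiableAt ((psi_contDiff hδ).differentiable (by simp) x)
  have h3 : gradient (GW (N := N) α δ) x = gradient (fun y => Real.exp (α * psi δ y)) x := rfl
  rw [h3, h2, h1.deriv, norm_smul, Real.norm_of_nonneg (by positivity)]
  change GW α δ x * (α * 1) * _ ≤ _
  have := GW_pos α δ x
  calc _ ≤ GW α δ x * (α * 1) * 1 := by
        gcongr
        exact norm_grad_psi hδ x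
    _ = _ := by ring

theorem GW_rpow_contDiff {N : ℕ} {α δ : ℝ} (hδ : 0 < δ) (s : ℝ) :
    ContDiff ℝ (⊤ : ℕ∞) (fun x : EucN N => GW α δ x ^ s) :=
  (GW_contDiff hδ).rpow_const_of_ne fun x => (GW_pos α δ x).ne'

/-- Smooth cutoff vanishing on the ball of radius `ρ`. -/
def eta {N : ℕ} (ρ : ℝ) (x : EucN N) : ℝ := Real.smoothTransition (‖x‖ ^ 2 - ρ ^ 2)

theorem eta_contDiff {N : ℕ} (ρ : ℝ) : ContDiff ℝ (⊤ : ℕ∞) (eta (N := N) ρ) :=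
  Real.smoothTransition.contDiff.comp ((contDiff_norm_sq ℝ).sub contDiff_const)

theorem eta_nonneg {N : ℕ} (ρ : ℝ) (x : EucN N) : 0 ≤ eta ρ x := Real.smoothTransition.nonneg _

theorem eta_le_one {N : ℕ} (ρ : ℝ) (x : EucN N) : eta ρ x ≤ 1 := Real.smoothTransition.le_one _

theorem eta_zero {N : ℕ} {ρ : ℝ} (x : EucN N) (h : ‖x‖ ≤ ρ) : eta ρ x = 0 := by
  apply Real.smoothTransition.zero_of_nonpos
  nlinarith [norm_nonneg x]

theorem eta_one {N : ℕ} {ρ : ℝ} (hρ : 0 < ρ) (x : EucN N) (h : ρ + 1 ≤ ‖x‖) : eta ρ x = 1 := by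
  apply Real.smoothTransition.one_of_one_le
  nlinarith [norm_nonneg x]

theorem glue_rpow {p : ℝ} (hp : 0 < p) (t : ℝ) : expNegInvGlue t ^ p = expNegInvGlue (t / p) := by
  rcases le_or_gt t 0 with h | h
  · rw [expNegInvGlue.zero_of_nonpos h, expNegInvGlue.zero_of_nonpos (div_nonpos_of_nonpos_of_nonneg h hp.le),
      Real.zero_rpow hp.ne']
  · rw [expNegInvGlue, expNegInvGlue, if_neg (not_le.mpr h), if_neg (not_le.mpr (div_pos h hp)),
      ← Real.exp_mul]
    congr 1; field_simp

theorem eta_rpow_contDiff {N : ℕ} {p : ℝ} (hp : 0 < p) (ρ : ℝ) :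
    ContDiff ℝ (⊤ : ℕ∞) (fun x : EucN N => eta ρ x ^ p) := by
  have h : ContDiff ℝ (⊤ : ℕ∞) (fun t : ℝ => Real.smoothTransition t ^ p) := by
    have e : (fun t : ℝ => Real.smoothTransition t ^ p) = fun t => expNegInvGlue (t / p) *
        (expNegInvGlue t + expNegInvGlue (1 - t)) ^ (-p) := by
      ext t
      have := Real.smoothTransition.pos_denom t
      rw [Real.smoothTransition, Real.div_rpow (expNegInvGlue.nonneg _) this.le, glue_rpow hp,
        Real.rpow_neg this.le, div_eq_mul_inv]
    rw [e]
    refine (expNegInvGlue.contDiff.comp (contDiff_id.div_const p)).mul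
      (ContDiff.rpow_const_of_ne ?_ fun t => (Real.smoothTransition.pos_denom t).ne')
    exact expNegInvGlue.contDiff.add (expNegInvGlue.contDiff.comp (contDiff_const.sub contDiff_id))
  exact h.comp ((contDiff_norm_sq ℝ).sub contDiff_const)

theorem grad_eta_zero {N : ℕ} {ρ : ℝ} (hρ : 0 < ρ) (x : EucN N) (h : ρ + 1 < ‖x‖) :
    gradient (eta ρ) x = 0 := by
  have : eta (N := N) ρ =ᶠ[𝓝 x] fun _ => 1 := by
    filter_upwards [continuous_norm.continuousAt.eventually (lt_mem_nhds h)] with y hy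
    exact eta_one hρ y (le_of_lt hy)
  rw [grad_eq, this.fderiv_eq]; simp

theorem grad_eta_bdd {N : ℕ} {ρ : ℝ} (hρ : 0 < ρ) :
    ∃ L : ℝ, 0 ≤ L ∧ ∀ x : EucN N, ‖gradient (eta ρ) x‖ ≤ L := by
  obtain ⟨L, hL⟩ := (isCompact_closedBall (0 : EucN N) (ρ + 1)).exists_bound_of_continuousOn
    (continuous_grad (eta_contDiff (N := N) ρ)).continuousOn
  have L0 : 0 ≤ L := (norm_nonneg _).trans (hL 0 (by simp; linarith))
  refine ⟨L, L0, fun x => ?_⟩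
  rcases le_or_gt ‖x‖ (ρ + 1) with h | h
  · exact hL x (by simpa using h)
  · rw [grad_eta_zero hρ x h]; simpa using L0


/-! ### Weighted `L^p` bound -/

theorem agmon_weight {N : ℕ} {p : ℝ} (hp : 1 < p) {Ω : Set (EucN N)} {lam μ ε C R α : ℝ}
    (hC0 : 0 ≤ C)
    (hC : ∀ (a b : EucN N), ‖a + b‖ ^ p ≤
      (1 + ε) * (‖a‖ ^ p + p * (‖a‖ ^ (p - 2) * ⟪a, b⟫)) + C * ‖b‖ ^ p)
    (hR : 0 < R) (hα : 0 < α)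
    (hμ : ENNReal.ofReal μ ≤ lambda1p N p hp.le (Ω \ closure (ball (0 : EucN N) R)))
    (hlt : (1 + ε) * lam + C * (2 ^ p * α ^ p) < μ) :
    ∃ K : ℝ, 0 < K ∧ ∀ (u : EucN N → ℝ) (g : EucN N → EucN N), Eig p Ω lam u g →
      ∀ δ > 0, ∫ x, |GW α δ x * u x| ^ p ≤ K * ∫ x, |u x| ^ p := by
  have p0 : 0 < p := by linarith
  set ρ := R + 1 with hρd
  have hρ : 0 < ρ := by linarith
  obtain ⟨Lη, Lη0, hLη⟩ := grad_eta_bdd (N := N) hρ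
  set B : ℝ := Real.exp (α * (1 + (ρ + 1))) with hB
  have B0 : 0 < B := Real.exp_pos _
  set C1 : ℝ := B * Lη with hC1
  have C10 : 0 ≤ C1 := by positivity
  set gap := μ - ((1 + ε) * lam + C * (2 ^ p * α ^ p)) with hgap
  have gap0 : 0 < gap := by linarith
  refine ⟨C * (2 ^ p * C1 ^ p) / gap + B ^ p, by positivity, fun u g hE δ hδ => ?_⟩
  have hu := hE.1.1
  set H : EucN N → ℝ := fun x => eta ρ x * GW α δ x with hH
  have H0 : ∀ x, 0 ≤ H x := fun x => mul_nonneg (eta_nonneg ρ x) (GW_pos α δ x).le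
  have cH : ContDiff ℝ (⊤ : ℕ∞) H := (eta_contDiff ρ).mul (GW_contDiff hδ)
  have cHp : ContDiff ℝ (⊤ : ℕ∞) (fun x => H x ^ p) := by
    have : (fun x => H x ^ p) = fun x => eta ρ x ^ p * GW α δ x ^ p := by
      ext x; exact Real.mul_rpow (eta_nonneg ρ x) (GW_pos α δ x).le
    rw [this]
    exact (eta_rpow_contDiff p0 ρ).mul (GW_rpow_contDiff hδ p)
  have gH : ∀ x, ‖gradient H x‖ ≤ α * H x + C1 := by
    intro x
    rw [hH, grad_mul ((eta_contDiff ρ).differentiable (by simp) x)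
      ((GW_contDiff hδ).differentiable (by simp) x)]
    refine (norm_add_le _ _).trans (add_le_add ?_ ?_)
    · rw [norm_smul, Real.norm_of_nonneg (eta_nonneg ρ x)]
      calc _ ≤ eta ρ x * (α * GW α δ x) :=
            mul_le_mul_of_nonneg_left (norm_grad_GW hα hδ x) (eta_nonneg ρ x)
        _ = _ := by ring
    · rw [norm_smul, Real.norm_of_nonneg (GW_pos α δ x).le]
      rcases le_or_gt ‖x‖ (ρ + 1) with h | h
      · refine mul_le_mul ((GW_le_norm hα hδ x).trans ?_) (hLη x) (norm_nonneg _) B0.le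
        exact Real.exp_le_exp.mpr (by gcongr)
      · rw [grad_eta_zero hρ x h]; simpa using C10
  set D := Real.exp (α * δ⁻¹) with hD
  have D0 : 0 < D := Real.exp_pos _
  have HD : ∀ x, H x ≤ D := fun x => by
    calc H x ≤ 1 * D := mul_le_mul (eta_le_one ρ x) (GW_le hα hδ x) (GW_pos α δ x).le zero_le_one
      _ = D := one_mul D
  have A := agmon hp hE hC hμ cH cHp H0 (L := max D (α * D + C1))
    (fun x => (HD x).trans (le_max_left _ _))
    (fun x => (gH x).trans (le_trans (by have := HD x; gcongr) (le_max_right _ _)))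
    (by
      rintro x ⟨hx, hxΩ⟩
      refine ⟨hxΩ, fun hx2 => ?_⟩
      have h1 : tsupport H ⊆ {x | ρ ≤ ‖x‖} := by
        refine closure_minimal (fun y hy => ?_) (isClosed_le continuous_const continuous_norm)
        by_contra hy2
        refine hy ?_
        simp only [mem_ofPred_eq, not_le] at hy2
        simp only [hH]
        rw [eta_zero y hy2.le, zero_mul]
      have h2 := h1 hx
      have h3 := closure_ball_subset_closedBall hx2
      simp only [mem_ofPred_eq, mem_closedBall, dist_zero_right] at h2 h3
      linarith)
  have mul_memLp : ∀ {w : EucN N → ℝ} {M : ℝ}, Continuous w → (∀ x, |w x| ≤ M) →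
      MemLp (fun x => w x * u x) (ENNReal.ofReal p) volume := fun {w M} cw hw => by
    refine (hu.norm.const_mul M).mono (cw.aestronglyMeasurable.mul hu.1)
      (Eventually.of_forall fun x => ?_)
    have M0 : 0 ≤ M := (abs_nonneg _).trans (hw x)
    rw [norm_mul, norm_mul, norm_norm, Real.norm_of_nonneg M0]
    exact mul_le_mul_of_nonneg_right (hw x) (norm_nonneg _)
  have mH := mul_memLp cH.continuous (M := D) (fun x => by rw [abs_of_nonneg (H0 x)]; exact HD x)
  have mG := mul_memLp (GW_contDiff (α := α) hδ).continuous (M := D)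
    (fun x => by rw [abs_of_nonneg (GW_pos α δ x).le]; exact GW_le hα hδ x)
  have iH : Integrable (fun x => |H x * u x| ^ p) volume := integrable_pow hp mH
  have iG : Integrable (fun x => |GW α δ x * u x| ^ p) volume := integrable_pow hp mG
  have iu : Integrable (fun x => |u x| ^ p) volume := integrable_pow hp hu
  have I2 : ∫ x, ‖u x • gradient H x‖ ^ p ≤
      2 ^ p * α ^ p * (∫ x, |H x * u x| ^ p) + 2 ^ p * C1 ^ p * ∫ x, |u x| ^ p := by
    rw [← integral_const_mul, ← integral_const_mul, ← integral_add (iH.const_mul _) (iu.const_mul _)]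
    refine integral_mono_of_nonneg (Eventually.of_forall fun x => by positivity)
      ((iH.const_mul _).add (iu.const_mul _)) (Eventually.of_forall fun x => ?_)
    have k1 : ‖u x • gradient H x‖ ≤ α * |H x * u x| + C1 * |u x| := by
      rw [norm_smul, Real.norm_eq_abs, abs_mul, abs_of_nonneg (H0 x)]
      calc _ ≤ |u x| * (α * H x + C1) := mul_le_mul_of_nonneg_left (gH x) (abs_nonneg _)
        _ = _ := by ring
    simp only
    calc ‖u x • gradient H x‖ ^ p ≤ (α * |H x * u x| + C1 * |u x|) ^ p := by gcongr
      _ ≤ 2 ^ p * ((α * |H x * u x|) ^ p + (C1 * |u x|) ^ p) :=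
          aux_pow_add_le hp (by positivity) (by positivity)
      _ = _ := by
          rw [Real.mul_rpow hα.le (abs_nonneg _), Real.mul_rpow C10 (abs_nonneg _)]; ring
  have I3 : ∫ x, |GW α δ x * u x| ^ p ≤ (∫ x, |H x * u x| ^ p) + B ^ p * ∫ x, |u x| ^ p := by
    rw [← integral_const_mul, ← integral_add iH (iu.const_mul _)]
    refine integral_mono iG (iH.add (iu.const_mul _)) fun x => ?_
    simp only
    rcases le_or_gt ‖x‖ (ρ + 1) with h | h
    · have : |GW α δ x * u x| ^ p ≤ B ^ p * |u x| ^ p := by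
        rw [← Real.mul_rpow B0.le (abs_nonneg _), abs_mul, abs_of_nonneg (GW_pos α δ x).le]
        have := GW_pos α δ x
        refine Real.rpow_le_rpow (by positivity) ?_ p0.le
        refine mul_le_mul_of_nonneg_right ((GW_le_norm hα hδ x).trans ?_) (abs_nonneg _)
        exact Real.exp_le_exp.mpr (by gcongr)
      have h2 : 0 ≤ |H x * u x| ^ p := by positivity
      linarith
    · have : H x = GW α δ x := by simp only [hH]; rw [eta_one hρ x h.le, one_mul]
      rw [this]
      have : 0 ≤ B ^ p * |u x| ^ p := by positivity
      linarith
  set Xi := ∫ x, |H x * u x| ^ p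
  set Ui := ∫ x, |u x| ^ p
  have A2 : gap * Xi ≤ C * (2 ^ p * C1 ^ p) * Ui := by
    have := mul_le_mul_of_nonneg_left I2 hC0
    rw [hgap]; linarith
  have A3 : Xi ≤ C * (2 ^ p * C1 ^ p) / gap * Ui := by
    rw [div_mul_eq_mul_div, le_div_iff₀ gap0]; linarith
  linarith


/-! ### De Giorgi energy estimate -/

theorem energy_pointwise {N : ℕ} {p : ℝ} (hp : 1 < p) {α C : ℝ}
    (hy : ∀ a t : ℝ, 0 ≤ a → 0 ≤ t → t * a ^ (p - 1) ≤ 1 / 2 * a ^ p + C * t ^ p)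
    (hα : 0 < α) (ξ b c : EucN N) (v d f : ℝ) (hb : ‖b‖ ≤ α * |v|) (hc : ‖c‖ ≤ α)
    (hd : 0 ≤ d) (hd1 : d ≤ 1) (hf : 0 ≤ f) (hfd : f ≤ |v| * d) :
    ‖d • (ξ + b)‖ ^ p ≤ 2 ^ p * 2 * (d * (‖ξ‖ ^ (p - 2) * ⟪ξ, ξ + b⟫)
        + (p - 1) * f * (‖ξ‖ ^ (p - 2) * ⟪ξ, c⟫))
      + 2 ^ p * (2 * (C * (p * α) ^ p) + α ^ p) * (d * |v| ^ p) := by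
  have p0 : 0 < p := by linarith
  have x0 := norm_nonneg ξ
  have v0 := abs_nonneg v
  have X1 : 0 ≤ ‖ξ‖ ^ (p - 1) := by positivity
  have h1 : -(‖ξ‖ ^ (p - 1) * (α * |v|)) ≤ ‖ξ‖ ^ (p - 2) * ⟪ξ, b⟫ := by
    have := (abs_le.mp (aux_norm_pow_inner_le (p := p) ξ b)).1
    have := mul_le_mul_of_nonneg_left hb X1
    linarith
  have h2 : -(‖ξ‖ ^ (p - 1) * α) ≤ ‖ξ‖ ^ (p - 2) * ⟪ξ, c⟫ := by
    have := (abs_le.mp (aux_norm_pow_inner_le (p := p) ξ c)).1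
    have := mul_le_mul_of_nonneg_left hc X1
    linarith
  have h3 : ‖ξ‖ ^ (p - 2) * ⟪ξ, ξ + b⟫ = ‖ξ‖ ^ p + ‖ξ‖ ^ (p - 2) * ⟪ξ, b⟫ := by
    rw [inner_add_right, mul_add, aux_norm_pow_inner hp]
  have h4 := hy ‖ξ‖ (p * α * |v|) x0 (by positivity)
  rw [Real.mul_rpow (by positivity : 0 ≤ p * α) v0] at h4
  set P := d * (‖ξ‖ ^ (p - 2) * ⟪ξ, ξ + b⟫) + (p - 1) * f * (‖ξ‖ ^ (p - 2) * ⟪ξ, c⟫) with hP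
  have h5 : d * (1 / 2 * ‖ξ‖ ^ p - C * ((p * α) ^ p * |v| ^ p)) ≤ P := by
    have q0 : 0 ≤ (p - 1) * f := mul_nonneg (by linarith) hf
    have a1 := mul_le_mul_of_nonneg_left h2 q0
    have a2 : (p - 1) * f * (‖ξ‖ ^ (p - 1) * α) ≤ (p - 1) * (|v| * d) * (‖ξ‖ ^ (p - 1) * α) := by
      have : 0 ≤ p - 1 := by linarith
      gcongr
    have a3 := mul_le_mul_of_nonneg_left h1 hd
    have a4 := mul_le_mul_of_nonneg_left h4 hd
    rw [hP, h3]
    nlinarith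
  have h6 : ‖d • (ξ + b)‖ ^ p ≤ d * (2 ^ p * (‖ξ‖ ^ p + α ^ p * |v| ^ p)) := by
    rw [norm_smul, Real.norm_of_nonneg hd, Real.mul_rpow hd (norm_nonneg _)]
    refine mul_le_mul ?_ ?_ (by positivity) hd
    · calc d ^ p ≤ d ^ (1 : ℝ) := Real.rpow_le_rpow_of_exponent_ge' hd hd1 zero_le_one hp.le
        _ = d := Real.rpow_one d
    · calc ‖ξ + b‖ ^ p ≤ (‖ξ‖ + α * |v|) ^ p := by
            have := (norm_add_le ξ b).trans (add_le_add_right hb _)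
            gcongr
        _ ≤ _ := aux_pow_add_le hp x0 (by positivity)
        _ = _ := by rw [Real.mul_rpow hα.le v0]
  have two0 : (0:ℝ) < 2 ^ p := by positivity
  have h7 := mul_le_mul_of_nonneg_left h5 two0.le
  refine h6.trans ?_
  linear_combination 2 * h7

theorem energy {N : ℕ} {p : ℝ} (hp : 1 < p) {α lam : ℝ} (hα : 0 < α) (hlam : 0 ≤ lam) :
    ∃ K : ℝ, 0 ≤ K ∧ ∀ (Ω : Set (EucN N)) (u : EucN N → ℝ) (g : EucN N → EucN N),
      Eig p Ω lam u g → ∀ δ > 0, ∀ k e : ℝ, 0 ≤ k → 0 < e →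
      ∃ f' : EucN N → EucN N, W0 p Ω (fun x => FT k e (GW α δ x * u x)) f' ∧
        ∫ x, ‖f' x‖ ^ p ≤ K * ∫ x in {x | k < GW α δ x * u x}, |GW α δ x * u x| ^ p := by
  obtain ⟨C, hC0, hy⟩ := aux_young hp (ε := 1 / 2) (by norm_num)
  have p0 : 0 < p := by linarith
  set K2 : ℝ := 2 ^ p * (2 * (C * (p * α) ^ p) + α ^ p) with hK2
  have K20 : 0 ≤ K2 := by positivity
  refine ⟨2 ^ p * 2 * lam + K2, by positivity, fun Ω u g hE δ hδ k e hk he => ?_⟩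
  obtain ⟨hW, hT⟩ := hE
  set G : EucN N → ℝ := GW α δ with hG
  have G0 : ∀ x, 0 < G x := GW_pos α δ
  set D := Real.exp (α * δ⁻¹) with hD
  have D0 : 0 < D := Real.exp_pos _
  have GD : ∀ x, G x ≤ D := GW_le hα hδ
  have gG : ∀ x, ‖gradient G x‖ ≤ α * G x := norm_grad_GW hα hδ
  have G1 : ∀ x, 1 ≤ G x := GW_ge_one hα hδ
  have cG : ContDiff ℝ (⊤ : ℕ∞) G := GW_contDiff hδ
  have hv := hW.mul hp.le (Ω' := Ω) cG (L := max D (α * D))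
    (fun x => by rw [abs_of_pos (G0 x)]; exact (GD x).trans (le_max_left _ _))
    (fun x => (gG x).trans ((mul_le_mul_of_nonneg_left (GD x) hα.le).trans (le_max_right _ _)))
    inter_subset_right
  have hF' : ∀ t, 0 ≤ deriv (FT k e) t := fun t => by rw [FT_deriv he]; exact F0_deriv_nonneg _
  have hF1 : ∀ t, deriv (FT k e) t ≤ 1 := fun t => by rw [FT_deriv he]; exact F0_deriv_le_one _
  have hf := hv.comp hp.le (FT_contDiff k e) (FT_of_le he hk)
    (fun t => by rw [abs_of_nonneg (hF' t)]; exact hF1 t)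
  refine ⟨_, hf, ?_⟩
  have gGp : ∀ x, gradient (fun y => G y ^ (p - 1)) x = ((p - 1) * G x ^ (p - 1 - 1)) • gradient G x :=
    fun x => grad_rpow (cG.differentiable (by simp) x) (Or.inl (G0 x).ne')
  have GpD : ∀ x, G x ^ (p - 1) ≤ D ^ (p - 1) := fun x =>
    Real.rpow_le_rpow (G0 x).le (GD x) (by linarith)
  have hφ := hf.mul hp.le (Ω' := Ω) (GW_rpow_contDiff (α := α) hδ (p - 1))
    (L := max (D ^ (p - 1)) ((p - 1) * (α * D ^ (p - 1))))
    (fun x => by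
      rw [abs_of_nonneg (Real.rpow_nonneg (G0 x).le _)]
      exact (GpD x).trans (le_max_left _ _))
    (fun x => by
      have q0 : 0 ≤ p - 1 := by linarith
      have r0 := Real.rpow_nonneg (G0 x).le (p - 1 - 1)
      refine le_trans ?_ (le_max_right _ _)
      have := gGp x
      simp only [hG] at this
      rw [this, norm_smul, Real.norm_of_nonneg (mul_nonneg q0 r0), mul_assoc]
      refine mul_le_mul_of_nonneg_left ?_ q0
      calc _ ≤ G x ^ (p - 1 - 1) * (α * G x) := mul_le_mul_of_nonneg_left (gG x) r0
        _ = α * G x ^ (p - 1) := by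
          rw [Real.rpow_sub_one (G0 x).ne' (p - 1)]; have := (G0 x).ne'; field_simp
        _ ≤ _ := mul_le_mul_of_nonneg_left (GpD x) hα.le) inter_subset_right
  have T := hT _ _ hφ
  set v : EucN N → ℝ := fun x => G x * u x with hvd
  have iv : Integrable (fun x => |v x| ^ p) volume := integrable_pow hp hv.1
  -- pointwise identity for the tested equation
  have e1 : ∀ x, ‖g x‖ ^ (p - 2) * ⟪g x, (G x ^ (p - 1)) • (deriv (FT k e) (v x) •
        (G x • g x + u x • gradient G x)) + FT k e (v x) • gradient (fun y => G y ^ (p - 1)) x⟫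
      = deriv (FT k e) (v x) * (‖G x • g x‖ ^ (p - 2) * ⟪G x • g x, G x • g x + u x • gradient G x⟫)
        + (p - 1) * FT k e (v x) * (‖G x • g x‖ ^ (p - 2) * ⟪G x • g x, (G x)⁻¹ • gradient G x⟫) := by
    intro x
    rw [gGp, norm_smul, Real.norm_of_nonneg (G0 x).le, Real.mul_rpow (G0 x).le (norm_nonneg _),
      ← rpow_sub_two_mul hp (G0 x).le, show p - 1 - 1 = p - 2 by ring]
    simp only [inner_add_right, real_inner_smul_left, real_inner_smul_right]
    have := (G0 x).ne'
    field_simp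
  have e2 : ∀ x, |u x| ^ (p - 2) * u x * (G x ^ (p - 1) * FT k e (v x))
      ≤ Set.indicator {x | k < v x} (fun x => |v x| ^ p) x := by
    intro x
    by_cases h : k < v x
    · rw [indicator_of_mem (show x ∈ {x | k < v x} from h)]
      have q := FT_le_abs hk he (v x)
      have q2 := FT_nonneg (k := k) he (v x)
      have a1 : |u x| ^ (p - 2) * u x ≤ |u x| ^ (p - 1) := by
        rw [← rpow_sub_two_mul hp (abs_nonneg _)]
        exact mul_le_mul_of_nonneg_left (le_abs_self _) (by positivity)
      have r0 := Real.rpow_nonneg (G0 x).le (p - 1)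
      calc _ ≤ |u x| ^ (p - 1) * (G x ^ (p - 1) * |v x|) := by gcongr
        _ = (G x * |u x|) ^ (p - 1) * |v x| := by
          rw [Real.mul_rpow (G0 x).le (abs_nonneg _)]; ring
        _ = |v x| ^ (p - 1) * |v x| := by
          rw [hvd]; simp only; rw [abs_mul, abs_of_pos (G0 x)]
        _ = _ := rpow_sub_one_mul hp (abs_nonneg _)
    · rw [FT_of_le he (not_lt.mp h), mul_zero, mul_zero]
      exact indicator_nonneg (fun y _ => by positivity) x
  have ms : NullMeasurableSet {x | k < v x} volume :=
    nullMeasurableSet_lt aemeasurable_const hv.1.1.aemeasurable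
  have iI : Integrable (Set.indicator {x | k < v x} (fun x => |v x| ^ p)) volume :=
    iv.indicator₀ ms
  rw [← integral_indicator₀ ms]
  have iT := integrable_pairing hp hW.2.1 hφ.2.1
  have T2 : ∫ x, |u x| ^ (p - 2) * u x * (G x ^ (p - 1) * FT k e (v x)) ≤
      ∫ x, Set.indicator {x | k < v x} (fun x => |v x| ^ p) x := by
    refine integral_mono ?_ iI e2
    have := integrable_pairing hp hW.1 hφ.1
    refine this.congr (Eventually.of_forall fun x => ?_)
    simp [mul_comm, mul_assoc, mul_left_comm, hG, hvd]
  calc _ ≤ ∫ x, (2 ^ p * 2 * (‖g x‖ ^ (p - 2) * ⟪g x, (G x ^ (p - 1)) • (deriv (FT k e) (v x) •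
        (G x • g x + u x • gradient G x)) + FT k e (v x) • gradient (fun y => G y ^ (p - 1)) x⟫)
        + K2 * Set.indicator {x | k < v x} (fun x => |v x| ^ p) x) := by
        refine integral_mono (integrable_pow hp hf.2.1)
          ((iT.const_mul _).add (iI.const_mul _)) fun x => ?_
        simp only
        have E := energy_pointwise hp hy hα (G x • g x) (u x • gradient G x)
          ((G x)⁻¹ • gradient G x) (v x) (deriv (FT k e) (v x)) (FT k e (v x))
          (by
            rw [norm_smul, hvd]; simp only
            rw [abs_mul, abs_of_pos (G0 x), Real.norm_eq_abs]
            calc _ ≤ |u x| * (α * G x) := mul_le_mul_of_nonneg_left (gG x) (abs_nonneg _)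
              _ = _ := by ring)
          (by
            rw [norm_smul, norm_inv, Real.norm_of_nonneg (G0 x).le, inv_mul_le_iff₀ (G0 x)]
            linarith [gG x])
          (hF' _) (hF1 _) (FT_nonneg he _) (FT_le hk he _)
        rw [e1]
        refine E.trans (add_le_add_right (mul_le_mul_of_nonneg_left ?_ K20) _)
        by_cases h : k < v x
        · rw [indicator_of_mem (show x ∈ {x | k < v x} from h)]
          exact mul_le_of_le_one_left (by positivity) (hF1 _)
        · rw [FT_deriv_of_le he (not_lt.mp h), zero_mul]
          exact indicator_nonneg (fun y _ => by positivity) x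
    _ = 2 ^ p * 2 * (lam * ∫ x, |u x| ^ (p - 2) * u x * (G x ^ (p - 1) * FT k e (v x)))
        + K2 * ∫ x, Set.indicator {x | k < v x} (fun x => |v x| ^ p) x := by
        rw [integral_add (iT.const_mul _) (iI.const_mul _), integral_const_mul,
          integral_const_mul]
        congr 2
    _ ≤ _ := by
        have := mul_le_mul_of_nonneg_left T2 (show 0 ≤ 2 ^ p * 2 * lam by positivity)
        linarith


/-! ### De Giorgi iteration -/

theorem iter_lemma {A b s : ℝ} (hA : 0 < A) (hb : 1 < b) (hs : 0 < s) :
    ∃ y0 : ℝ, 0 < y0 ∧ ∀ y : ℕ → ℝ, (∀ j, 0 ≤ y j) →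
      (∀ j, y (j + 1) ≤ A * b ^ j * y j * (y j) ^ s) → y 0 ≤ y0 → Tendsto y atTop (𝓝 0) := by
  set q : ℝ := b ^ (-(1 / s)) with hq
  have b0 : 0 < b := by linarith
  have q0 : 0 < q := by positivity
  have q1 : q < 1 := Real.rpow_lt_one_of_one_lt_of_neg hb (by have : 0 < 1 / s := by positivity
                                                              linarith)
  have hqs : q ^ s = b⁻¹ := by
    rw [hq, ← Real.rpow_mul b0.le, ← Real.rpow_neg_one]; congr 1; field_simp
  set y0 : ℝ := (q / A) ^ (1 / s) with hy0
  have y00 : 0 < y0 := by positivity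
  have hys : y0 ^ s = q / A := by
    rw [hy0, ← Real.rpow_mul (by positivity), one_div_mul_cancel hs.ne', Real.rpow_one]
  refine ⟨y0, y00, fun y hy hstep h0 => ?_⟩
  have key : ∀ j, y j ≤ y0 * q ^ j := by
    intro j
    induction j with
    | zero => simpa using h0
    | succ j ih =>
      have hyj := hy j
      calc y (j + 1) ≤ A * b ^ j * y j * (y j) ^ s := hstep j
        _ ≤ A * b ^ j * (y0 * q ^ j) * (y0 * q ^ j) ^ s := by gcongr
        _ = y0 * q ^ (j + 1) := by
          have e : (q ^ j) ^ s = (b ^ j)⁻¹ := by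
            rw [← Real.rpow_natCast, ← Real.rpow_mul q0.le, mul_comm, Real.rpow_mul q0.le, hqs,
              Real.rpow_natCast, inv_pow]
          rw [Real.mul_rpow y00.le (by positivity), hys, e, pow_succ]
          field_simp
  have t : Tendsto (fun j => y0 * q ^ j) atTop (𝓝 0) := by
    simpa using (tendsto_pow_atTop_nhds_zero_of_lt_one q0.le q1).const_mul y0
  exact tendsto_of_tendsto_of_tendsto_of_le_of_le tendsto_const_nhds t hy key

/-- The `L^p` mass on a superlevel set. -/
def mass {N : ℕ} (p : ℝ) (v : EucN N → ℝ) (k : ℝ) : ℝ≥0∞ := ∫⁻ x in {x | k < v x}, ‖v x‖ₑ ^ p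

theorem mass_anti {N : ℕ} (p : ℝ) (v : EucN N → ℝ) {k h : ℝ} (hkh : k ≤ h) :
    mass p v h ≤ mass p v k :=
  lintegral_mono_set fun _ hx => lt_of_le_of_lt hkh hx

theorem lintegral_pow_ofReal {N : ℕ} {V : Type*} [NormedAddCommGroup V] {p : ℝ} (hp : 1 < p)
    {f : EucN N → V} (s : Set (EucN N)) (hf : MemLp f (ENNReal.ofReal p) volume) :
    ∫⁻ x in s, ‖f x‖ₑ ^ p = ENNReal.ofReal (∫ x in s, ‖f x‖ ^ p) := by
  rw [ofReal_integral_eq_lintegral_ofReal (integrable_pow hp hf).integrableOn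
    (Eventually.of_forall fun x => by positivity)]
  refine lintegral_congr fun x => ?_
  rw [← ENNReal.ofReal_rpow_of_nonneg (norm_nonneg _) (by linarith), ofReal_norm]

theorem mass_ne_top {N : ℕ} {p : ℝ} (hp : 1 < p) {v : EucN N → ℝ}
    (hv : MemLp v (ENNReal.ofReal p) volume) (k : ℝ) : mass p v k ≠ ⊤ := by
  rw [mass, lintegral_pow_ofReal hp _ hv]; exact ENNReal.ofReal_ne_top

theorem mass_cheb {N : ℕ} {p : ℝ} (hp : 1 < p) {v : EucN N → ℝ}
    (hv : MemLp v (ENNReal.ofReal p) volume) {h : ℝ} (hh : 0 < h) :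
    ENNReal.ofReal (h ^ p) * volume {x | h < v x} ≤ mass p v h := by
  have p0 : 0 < p := by linarith
  have ms : NullMeasurableSet {x | h < v x} volume :=
    nullMeasurableSet_lt aemeasurable_const hv.1.aemeasurable
  rw [mass, ← setLIntegral_const]
  refine lintegral_mono_ae ?_
  filter_upwards [ae_restrict_mem₀ ms] with x hx
  have hx : h < v x := hx
  rw [← ofReal_norm, ENNReal.ofReal_rpow_of_nonneg (norm_nonneg _) p0.le]
  refine ENNReal.ofReal_le_ofReal (Real.rpow_le_rpow hh.le ?_ p0.le)
  exact hx.le.trans (le_abs_self _)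

theorem mass_step (N : ℕ) {p : ℝ} (hp : 1 < p) {K : ℝ} (hK : 0 ≤ K) :
    ∃ s : ℝ, 0 < s ∧ ∃ C : ℝ, 0 < C ∧ ∀ (Ω : Set (EucN N)) (v : EucN N → ℝ),
      MemLp v (ENNReal.ofReal p) volume →
      (∀ k e : ℝ, 0 ≤ k → 0 < e → ∃ f' : EucN N → EucN N,
        W0 p Ω (fun x => FT k e (v x)) f' ∧
        ∫ x, ‖f' x‖ ^ p ≤ K * ∫ x in {x | k < v x}, |v x| ^ p) →
      ∀ κ k h : ℝ, 0 < κ → κ ≤ k → k < h → h ≤ 2 * κ →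
        (mass p v h).toReal ≤ (Real.exp 1 * (2 * κ / (h - k))) ^ p * C * (mass p v k).toReal *
          ((mass p v k).toReal / κ ^ p) ^ s := by
  obtain ⟨χ, hχ, C, hC⟩ := sobolev N hp
  have p0 : 0 < p := by linarith
  have χ0 : 0 < χ := by linarith
  have s0 : 0 < 1 - 1 / χ := by
    have : 1 / χ < 1 := by rw [div_lt_one χ0]; exact hχ
    linarith
  refine ⟨1 - 1 / χ, s0, C * (1 + K) + 1, by positivity, fun Ω v hv hen κ k h hκ hk hkh hh => ?_⟩
  have k0 : 0 ≤ k := by linarith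
  have h0 : 0 < h := by linarith
  have hk' : 0 < h - k := by linarith
  obtain ⟨f', hf', hfe⟩ := hen k (h - k) k0 hk'
  set f : EucN N → ℝ := fun x => FT k (h - k) (v x) with hf
  have S := hC Ω f f' hf'
  set m := (mass p v k).toReal with hm
  have m0 : 0 ≤ m := ENNReal.toReal_nonneg
  have hmm : mass p v k = ENNReal.ofReal m := (ENNReal.ofReal_toReal (mass_ne_top hp hv k)).symm
  have hmi : m = ∫ x in {x | k < v x}, |v x| ^ p := by
    rw [hm, mass, lintegral_pow_ofReal hp _ hv, ENNReal.toReal_ofReal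
      (integral_nonneg fun x => by positivity)]
    rfl
  have msk : NullMeasurableSet {x | k < v x} volume :=
    nullMeasurableSet_lt aemeasurable_const hv.1.aemeasurable
  have msh : NullMeasurableSet {x | h < v x} volume :=
    nullMeasurableSet_lt aemeasurable_const hv.1.aemeasurable
  have S1 : ∫⁻ x, ‖f x‖ₑ ^ p ≤ ENNReal.ofReal m := by
    rw [← hmm, mass, ← lintegral_indicator₀ msk]
    refine lintegral_mono fun x => ?_
    by_cases hx : k < v x
    · rw [indicator_of_mem (show x ∈ {x | k < v x} from hx)]
      refine ENNReal.rpow_le_rpow (enorm_le_iff_norm_le.mpr ?_) p0.le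
      rw [Real.norm_of_nonneg (FT_nonneg hk' _)]
      exact FT_le_abs k0 hk' _
    · have : f x = 0 := FT_of_le hk' (not_lt.mp hx)
      rw [this]; simp [p0]
  have S2 : ∫⁻ x, ‖f' x‖ₑ ^ p ≤ ENNReal.ofReal (K * m) := by
    have := lintegral_pow_ofReal hp univ hf'.2.1
    rw [Measure.restrict_univ] at this
    rw [this, hmi]
    exact ENNReal.ofReal_le_ofReal hfe
  have S3 : (∫⁻ x, ‖f x‖ₑ ^ (p * χ)) ^ (1 / χ) ≤ ENNReal.ofReal ((C * (1 + K) + 1) * m) := by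
    refine S.trans ((mul_le_mul_right (add_le_add S1 S2) _).trans ?_)
    rw [← ENNReal.ofReal_add m0 (by positivity), ← ENNReal.ofReal_coe_nnreal,
      ← ENNReal.ofReal_mul (by positivity)]
    refine ENNReal.ofReal_le_ofReal ?_
    nlinarith
  have V : volume {x | h < v x} ≤ ENNReal.ofReal (m / κ ^ p) := by
    have c1 := (mass_cheb hp hv h0).trans ((mass_anti p v hkh.le).trans_eq hmm)
    have c2 : ENNReal.ofReal (κ ^ p) * volume {x | h < v x} ≤ ENNReal.ofReal m := by
      refine le_trans (mul_le_mul_left (ENNReal.ofReal_le_ofReal ?_) _) c1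
      exact Real.rpow_le_rpow hκ.le (by linarith) p0.le
    have κp : 0 < κ ^ p := by positivity
    rw [ENNReal.ofReal_div_of_pos κp, ENNReal.le_div_iff_mul_le (Or.inl (by simpa using κp))
      (Or.inl ENNReal.ofReal_ne_top), mul_comm]
    exact c2
  have mf : AEMeasurable (fun x => ‖f x‖ₑ ^ p) volume := hf'.1.1.enorm.pow_const p
  have Ho : ∫⁻ x in {x | h < v x}, ‖f x‖ₑ ^ p ≤
      ENNReal.ofReal ((C * (1 + K) + 1) * m) * ENNReal.ofReal (m / κ ^ p) ^ (1 - 1 / χ) := by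
    have hconj := Real.HolderConjugate.conjExponent hχ
    have := ENNReal.lintegral_mul_le_Lp_mul_Lq (volume.restrict {x | h < v x}) hconj
      (f := fun x => ‖f x‖ₑ ^ p) (g := fun _ => 1) mf.restrict aemeasurable_const
    simp only [Pi.mul_apply, mul_one, ENNReal.one_rpow, lintegral_const, one_mul,
      Measure.restrict_apply_univ, ← ENNReal.rpow_mul] at this
    have e : 1 / χ.conjExponent = 1 - 1 / χ := by
      have := hconj.inv_add_inv_eq_one
      simp only [one_div]; linarith
    rw [e] at this
    refine this.trans (mul_le_mul' ?_ (ENNReal.rpow_le_rpow V s0.le))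
    refine le_trans (ENNReal.rpow_le_rpow ?_ (by positivity)) S3
    exact setLIntegral_le_lintegral _ _
  set a : ℝ := Real.exp 1 * (2 * κ / (h - k)) with ha
  have a0 : 0 < a := by positivity
  have F : mass p v h ≤ ENNReal.ofReal (a ^ p) * ∫⁻ x in {x | h < v x}, ‖f x‖ₑ ^ p := by
    rw [mass, ← lintegral_const_mul'' _ mf.restrict]
    refine lintegral_mono_ae ?_
    filter_upwards [ae_restrict_mem₀ msh] with x hx
    have hx : h < v x := hx
    rw [← ofReal_norm, ← ofReal_norm, ENNReal.ofReal_rpow_of_nonneg (norm_nonneg _) p0.le,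
      ENNReal.ofReal_rpow_of_nonneg (norm_nonneg _) p0.le, ← ENNReal.ofReal_mul (by positivity),
      ← Real.mul_rpow a0.le (norm_nonneg _)]
    refine ENNReal.ofReal_le_ofReal (Real.rpow_le_rpow (norm_nonneg _) ?_ p0.le)
    have q2 := FT_nonneg (k := k) hk' (v x)
    rw [Real.norm_of_nonneg (by linarith), Real.norm_of_nonneg q2]
    refine (FT_ge k0 hkh hx.le).trans (mul_le_mul_of_nonneg_right ?_ q2)
    rw [ha]; gcongr
  have R := F.trans (mul_le_mul_right Ho _)
  rw [ENNReal.ofReal_rpow_of_nonneg (by positivity) s0.le, ← ENNReal.ofReal_mul (by positivity),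
    ← ENNReal.ofReal_mul (by positivity)] at R
  have := ENNReal.toReal_le_of_le_ofReal (by positivity) R
  refine this.trans (le_of_eq ?_)
  ring

theorem degiorgi (N : ℕ) {p : ℝ} (hp : 1 < p) {K : ℝ} (hK : 0 ≤ K) :
    ∃ C : ℝ, 0 < C ∧ ∀ (Ω : Set (EucN N)) (v : EucN N → ℝ),
      MemLp v (ENNReal.ofReal p) volume →
      (∀ k e : ℝ, 0 ≤ k → 0 < e → ∃ f' : EucN N → EucN N,
        W0 p Ω (fun x => FT k e (v x)) f' ∧
        ∫ x, ‖f' x‖ ^ p ≤ K * ∫ x in {x | k < v x}, |v x| ^ p) →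
      ∀ᵐ x, v x ≤ C * (∫ x, |v x| ^ p) ^ (1 / p) := by
  obtain ⟨s, hs, C, hC, hstep⟩ := mass_step N hp hK
  have p0 : 0 < p := by linarith
  have b1 : (1 : ℝ) < 2 ^ p := Real.one_lt_rpow (by norm_num) p0
  obtain ⟨y0, y00, hit⟩ := iter_lemma (A := (4 * Real.exp 1) ^ p * C) (b := 2 ^ p) (s := s)
    (by positivity) b1 hs
  refine ⟨2 * (y0⁻¹) ^ (1 / p), by positivity, fun Ω v hv hen => ?_⟩
  have iv : Integrable (fun x => |v x| ^ p) volume := integrable_pow hp hv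
  set M := ∫ x, |v x| ^ p with hM
  have M0 : 0 ≤ M := integral_nonneg fun x => by positivity
  rcases M0.eq_or_lt with hM0 | hM0
  · rw [hM] at hM0
    have := (integral_eq_zero_iff_of_nonneg (fun x => by positivity) iv).mp hM0.symm
    filter_upwards [this] with x hx
    have : |v x| ^ p = 0 := hx
    rw [Real.rpow_eq_zero (abs_nonneg _) p0.ne', abs_eq_zero] at this
    rw [this]; positivity
  set κ : ℝ := (y0⁻¹) ^ (1 / p) * M ^ (1 / p) with hκd
  have κ0 : 0 < κ := by positivity
  have κp : κ ^ p = M / y0 := by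
    rw [hκd, ← Real.mul_rpow (by positivity) M0, ← Real.rpow_mul (by positivity),
      one_div_mul_cancel p0.ne', Real.rpow_one]
    field_simp
  set kk : ℕ → ℝ := fun j => κ * (2 - (1 / 2) ^ j) with hkk
  have pw : ∀ j : ℕ, (0:ℝ) < (1 / 2) ^ j ∧ ((1:ℝ) / 2) ^ j ≤ 1 := fun j =>
    ⟨by positivity, pow_le_one₀ (by norm_num) (by norm_num)⟩
  have T := hit (fun j => (mass p v (kk j)).toReal / κ ^ p)
    (fun j => div_nonneg ENNReal.toReal_nonneg (by positivity))
    (fun j => by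
      have st := hstep Ω v hv hen κ (kk j) (kk (j + 1)) κ0
        (by simp only [hkk]; nlinarith [pw j])
        (by simp only [hkk]; rw [pow_succ]; nlinarith [pw j])
        (by simp only [hkk]; nlinarith [pw (j + 1)])
      have e : Real.exp 1 * (2 * κ / (kk (j + 1) - kk j)) = 4 * Real.exp 1 * 2 ^ j := by
        have : kk (j + 1) - kk j = κ * ((1 / 2) ^ j * (1 / 2)) := by
          simp only [hkk]; rw [pow_succ]; ring
        rw [this, one_div, inv_pow]
        field_simp
        norm_num
      have e2 : ((2:ℝ) ^ j) ^ p = (2 ^ p) ^ j := by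
        rw [← Real.rpow_natCast, ← Real.rpow_mul (by norm_num), mul_comm,
          Real.rpow_mul (by norm_num), Real.rpow_natCast]
      rw [e, Real.mul_rpow (by positivity) (by positivity), e2] at st
      rw [div_le_iff₀ (by positivity)]
      refine st.trans (le_of_eq ?_)
      have : κ ^ p ≠ 0 := by positivity
      field_simp)
    (by
      rw [div_le_iff₀ (by positivity), κp, mul_div_cancel₀ _ y00.ne']
      refine ENNReal.toReal_le_of_le_ofReal M0 ?_
      have := lintegral_pow_ofReal hp univ hv
      rw [Measure.restrict_univ] at this
      refine (setLIntegral_le_lintegral _ _).trans ?_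
      rw [this]; rfl)
  have hle : (mass p v (2 * κ)).toReal / κ ^ p ≤ 0 := by
    refine ge_of_tendsto' T fun j => ?_
    refine div_le_div_of_nonneg_right ?_ (by positivity)
    refine ENNReal.toReal_mono (mass_ne_top hp hv _) (mass_anti p v ?_)
    simp only [hkk]; nlinarith [pw j]
  have hz : (mass p v (2 * κ)).toReal = 0 := by
    have : 0 < κ ^ p := by positivity
    refine le_antisymm ?_ ENNReal.toReal_nonneg
    by_contra hc
    have := div_pos (not_le.mp hc) this
    linarith
  have hz2 : mass p v (2 * κ) = 0 :=
    ((ENNReal.toReal_eq_zero_iff _).mp hz).resolve_right (mass_ne_top hp hv _)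
  have hch := mass_cheb hp hv (h := 2 * κ) (by positivity)
  rw [hz2, nonpos_iff_eq_zero, mul_eq_zero] at hch
  have hvol : volume {x | 2 * κ < v x} = 0 := by
    refine hch.resolve_left ?_
    rw [ENNReal.ofReal_eq_zero, not_le]; positivity
  have := measure_eq_zero_iff_ae_notMem.mp hvol
  filter_upwards [this] with x hx
  have : v x ≤ 2 * κ := not_lt.mp hx
  rw [hκd] at this; linarith


/-! ### Conclusion -/

theorem Eig.neg {N : ℕ} {p : ℝ} (hp : 1 < p) {Ω : Set (EucN N)} {lam : ℝ} {u : EucN N → ℝ}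
    {g : EucN N → EucN N} (h : Eig p Ω lam u g) :
    Eig p Ω lam (fun x => -u x) (fun x => -g x) := by
  obtain ⟨hW, hT⟩ := h
  have h1 := hW.mul hp.le (Ω' := Ω) (A := fun _ => -1) contDiff_const (L := 1)
    (fun x => by simp) (fun x => by rw [gradient_fun_const]; simp) inter_subset_right
  refine ⟨?_, fun φ h hφ => ?_⟩
  · convert h1 using 2 with x x
    · ring
    · rw [gradient_fun_const]; simp
  · have := hT φ h hφ
    simp only [norm_neg, inner_neg_left, mul_neg, abs_neg, neg_mul, integral_neg]
    rw [this]

theorem upper_bound {N : ℕ} {p : ℝ} (hp : 1 < p) {Ω : Set (EucN N)} {lam μ ε C R α : ℝ}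
    (hlam : 0 ≤ lam) (hC0 : 0 ≤ C)
    (hC : ∀ (a b : EucN N), ‖a + b‖ ^ p ≤
      (1 + ε) * (‖a‖ ^ p + p * (‖a‖ ^ (p - 2) * ⟪a, b⟫)) + C * ‖b‖ ^ p)
    (hR : 0 < R) (hα : 0 < α)
    (hμ : ENNReal.ofReal μ ≤ lambda1p N p hp.le (Ω \ closure (ball (0 : EucN N) R)))
    (hlt : (1 + ε) * lam + C * (2 ^ p * α ^ p) < μ) :
    ∃ B : ℝ, 0 < B ∧ ∀ (u : EucN N → ℝ) (g : EucN N → EucN N), Eig p Ω lam u g →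
      ∀ᵐ x, u x ≤ B * (∫ y, |u y| ^ p) ^ (1 / p) * Real.exp (-α * ‖x‖) := by
  have p0 : 0 < p := by linarith
  obtain ⟨Ka, hKa, hA⟩ := agmon_weight hp hC0 hC hR hα hμ hlt
  obtain ⟨K, hK, hen⟩ := energy (N := N) hp hα hlam
  obtain ⟨Cd, hCd, hdg⟩ := degiorgi N hp hK
  refine ⟨Cd * Ka ^ (1 / p), by positivity, fun u g hE => ?_⟩
  set U := ∫ y, |u y| ^ p with hU
  have U0 : 0 ≤ U := integral_nonneg fun x => by positivity
  have hn : ∀ n : ℕ, ∀ᵐ x, GW α (1 / ((n : ℝ) + 1)) x * u x ≤ Cd * Ka ^ (1 / p) * U ^ (1 / p) := by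
    intro n
    set δ : ℝ := 1 / ((n : ℝ) + 1) with hδd
    have hδ : 0 < δ := by positivity
    have mv : MemLp (fun x => GW α δ x * u x) (ENNReal.ofReal p) volume := by
      refine (hE.1.1.norm.const_mul (Real.exp (α * δ⁻¹))).mono
        ((GW_contDiff (α := α) hδ).continuous.aestronglyMeasurable.mul hE.1.1.1)
        (Eventually.of_forall fun x => ?_)
      rw [norm_mul, norm_mul, norm_norm, Real.norm_of_nonneg (Real.exp_pos _).le,
        Real.norm_of_nonneg (GW_pos α δ x).le]
      exact mul_le_mul_of_nonneg_right (GW_le hα hδ x) (norm_nonneg _)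
    filter_upwards [hdg Ω _ mv (hen Ω u g hE δ hδ)] with x hx
    refine hx.trans ?_
    rw [mul_assoc, ← Real.mul_rpow hKa.le U0]
    refine mul_le_mul_of_nonneg_left ?_ hCd.le
    exact Real.rpow_le_rpow (integral_nonneg fun x => by positivity) (hA u g hE δ hδ) (by positivity)
  filter_upwards [ae_all_iff.mpr hn] with x hx
  have t : Tendsto (fun n : ℕ => GW α (1 / ((n : ℝ) + 1)) x * u x) atTop
      (𝓝 (Real.exp (α * jap x) * u x)) :=
    ((Real.continuous_exp.tendsto _).comp ((psi_tendsto x).const_mul α)).mul_const _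
  have hl := le_of_tendsto' t hx
  set Q := Cd * Ka ^ (1 / p) * U ^ (1 / p) with hQ
  have Q0 : 0 ≤ Q := by positivity
  have h1 : u x ≤ Q * Real.exp (-(α * jap x)) := by
    rw [Real.exp_neg, ← div_eq_mul_inv, le_div_iff₀ (Real.exp_pos _)]; linarith
  refine h1.trans (mul_le_mul_of_nonneg_left (Real.exp_le_exp.mpr ?_) Q0)
  have := mul_le_mul_of_nonneg_left (norm_le_jap x) hα.le
  linarith

theorem decay_bound {N : ℕ} {p : ℝ} (hp : 1 < p) {Ω : Set (EucN N)} {lam μ ε C R α : ℝ}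
    (hlam : 0 ≤ lam) (hC0 : 0 ≤ C)
    (hC : ∀ (a b : EucN N), ‖a + b‖ ^ p ≤
      (1 + ε) * (‖a‖ ^ p + p * (‖a‖ ^ (p - 2) * ⟪a, b⟫)) + C * ‖b‖ ^ p)
    (hR : 0 < R) (hα : 0 < α)
    (hμ : ENNReal.ofReal μ ≤ lambda1p N p hp.le (Ω \ closure (ball (0 : EucN N) R)))
    (hlt : (1 + ε) * lam + C * (2 ^ p * α ^ p) < μ) :
    ∃ B > (0 : ℝ), ∀ w, IsEigenfunction N p hp.le Ω lam w →
      ∀ᵐ x, x ∈ Ω → |w.1 x| ≤ B * (∫ y, |w.1 y| ^ p) ^ (1 / p) * Real.exp (-α * ‖x‖) := by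
  obtain ⟨B, hB, h⟩ := upper_bound hp hlam hC0 hC hR hα hμ hlt
  refine ⟨B, hB, fun w hw => ?_⟩
  have hE := eig_of_isEigenfunction hp hw
  filter_upwards [h _ _ hE, h _ _ (hE.neg hp)] with x h1 h2 _
  simp only [abs_neg] at h2
  exact abs_le.mpr ⟨by linarith, h1⟩

theorem exists_radius {N : ℕ} {p : ℝ} (hp : 1 ≤ p) {Ω : Set (EucN N)} {t : ℝ≥0∞}
    (ht : t < Einfty N p hp Ω) :
    ∃ R > (0 : ℝ), t < lambda1p N p hp (Ω \ closure (ball (0 : EucN N) R)) := by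
  unfold Einfty at ht
  obtain ⟨R, hR⟩ := lt_iSup_iff.mp ht
  obtain ⟨hR0, hR1⟩ := lt_iSup_iff.mp hR
  exact ⟨R, hR0, hR1⟩

theorem lambdaLS_mono {N : ℕ} {p : ℝ} (hp : 1 ≤ p) {Ω : Set (EucN N)} {l k : ℕ} (h : l ≤ k) :
    lambdaLS N p hp Ω l ≤ lambdaLS N p hp Ω k := by
  unfold lambdaLS
  refine biInf_mono fun K hK => ?_
  exact ⟨hK.1, hK.2.1, hK.2.2.1, hK.2.2.2.1, fun j hj => h.trans (hK.2.2.2.2 j hj)⟩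


theorem statement1 (N : ℕ) (p : ℝ) (hp1 : 1 < p) (Ω : Set (EucN N)) (hΩ : IsOpen Ω)
    (k : ℕ) (hk : k ≠ 0) (hlt : lambdaLS N p hp1.le Ω k < Einfty N p hp1.le Ω) :
    (Einfty N p hp1.le Ω ≠ ⊤ →
      ∀ ℓ : ℕ, 1 ≤ ℓ → ℓ ≤ k → ∃ C > (0 : ℝ), ∃ α > (0 : ℝ),
        ∀ w, IsEigenfunction N p hp1.le Ω ((lambdaLS N p hp1.le Ω ℓ).toReal) w →
          ∀ᵐ x, x ∈ Ω →
            |w.1 x| ≤ C * (∫ y, |w.1 y| ^ p) ^ (1/p) * Real.exp (-α * ‖x‖)) ∧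
    (Einfty N p hp1.le Ω = ⊤ →
      ∀ ℓ : ℕ, 1 ≤ ℓ → ∀ α > (0 : ℝ), ∃ C > (0 : ℝ),
        ∀ w, IsEigenfunction N p hp1.le Ω ((lambdaLS N p hp1.le Ω ℓ).toReal) w →
          ∀ᵐ x, x ∈ Ω →
            |w.1 x| ≤ C * (∫ y, |w.1 y| ^ p) ^ (1/p) * Real.exp (-α * ‖x‖)) := by
  have p0 : 0 < p := by linarith
  refine ⟨fun _ ℓ _ hℓ => ?_, fun hE ℓ _ α hα => ?_⟩
  · have hl := (lambdaLS_mono hp1.le (Ω := Ω) hℓ).trans_lt hlt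
    obtain ⟨R, hR, hRl⟩ := exists_radius hp1.le hl
    obtain ⟨r, hr1, hr2⟩ := ENNReal.lt_iff_exists_nnreal_btwn.mp hRl
    set lam := (lambdaLS N p hp1.le Ω ℓ).toReal with hlam
    have lam0 : 0 ≤ lam := ENNReal.toReal_nonneg
    have hlr : lam < (r : ℝ) := by
      have := (ENNReal.toReal_lt_toReal hr1.ne_top ENNReal.coe_ne_top).mpr hr1
      simpa using this
    have d0 : 0 < (r : ℝ) - lam := by linarith
    set ε : ℝ := ((r : ℝ) - lam) / (2 * (lam + 1)) with hε
    have ε0 : 0 < ε := by positivity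
    obtain ⟨C, hC0, hC⟩ := aux_key hp1 ε0
    set α : ℝ := (((r : ℝ) - lam) / (4 * (C + 1) * 2 ^ p)) ^ (1 / p) with hα
    have α0 : 0 < α := by positivity
    have hαp : α ^ p = ((r : ℝ) - lam) / (4 * (C + 1) * 2 ^ p) := by
      rw [hα, ← Real.rpow_mul (by positivity), one_div_mul_cancel p0.ne', Real.rpow_one]
    have i1 : ε * lam ≤ ((r : ℝ) - lam) / 2 := by
      rw [hε, div_mul_eq_mul_div, div_le_div_iff₀ (by positivity) (by positivity)]
      nlinarith
    have i2 : C * (2 ^ p * α ^ p) ≤ ((r : ℝ) - lam) / 4 := by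
      have e : C * (2 ^ p * α ^ p) = C * ((r : ℝ) - lam) / (4 * (C + 1)) := by
        rw [hαp]; field_simp
      rw [e, div_le_div_iff₀ (by positivity) (by positivity)]
      nlinarith
    obtain ⟨B, hB, h⟩ := decay_bound hp1 (Ω := Ω) (lam := lam) (μ := r) (ε := ε) (C := C) (R := R)
      (α := α) lam0 hC0 (hC N) hR α0 (by rw [ENNReal.ofReal_coe_nnreal]; exact hr2.le)
      (by linarith)
    exact ⟨B, hB, α, α0, h⟩
  · set lam := (lambdaLS N p hp1.le Ω ℓ).toReal with hlam
    have lam0 : 0 ≤ lam := ENNReal.toReal_nonneg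
    obtain ⟨C, hC0, hC⟩ := aux_key hp1 one_pos
    obtain ⟨R, hR, hRl⟩ := exists_radius hp1.le (Ω := Ω)
      (t := ENNReal.ofReal ((1 + 1) * lam + C * (2 ^ p * α ^ p) + 1))
      (by rw [hE]; exact ENNReal.ofReal_lt_top)
    exact decay_bound hp1 lam0 hC0 (hC N) hR hα hRl.le (by linarith)

end
end

section
/- Let E ⊆ ℝ^N be a measurable set with finite Lebesgue measure. Then there exists a constant C = C(N) > 0 such that for every φ ∈ C_c^∞(ℝ^N) and every ε > 0 one has ∫_E |φ|^N dx ≤ (C/ε) |E| ∫_{ℝ^N} |∇φ|^N dx + C ε ∫_{ℝ^N} |φ|^N dx. -/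
open MeasureTheory Filter Topology Metric Set ENNReal
open scoped RealInnerProductSpace

noncomputable section

theorem lady_aux (N : ℕ) (hN : 1 < N) : ∃ K : NNReal, ∀ φ : EucN N → ℝ,
    ContDiff ℝ (⊤ : ℕ∞) φ → HasCompactSupport φ →
    (∫⁻ x, ‖φ x‖ₑ ^ (2 * N)) ^ (N - 1) ≤ K * ((∫⁻ x, ‖fderiv ℝ φ x‖ₑ ^ N) *
      (∫⁻ x, ‖φ x‖ₑ ^ N) * (∫⁻ x, ‖φ x‖ₑ ^ (2 * N)) ^ (N - 2)) := by
  obtain ⟨m, rfl⟩ : ∃ m, N = m + 2 := ⟨N - 2, by omega⟩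
  set N := m + 2 with hNm
  have hm1 : (0:ℝ) < m + 1 := by positivity
  have hN0 : (0:ℝ) < m + 2 := by positivity
  have hp : (Module.finrank ℝ (EucN N) : ℝ).HolderConjugate ((m + 2 : ℝ) / (m + 1)) := by
    rw [finrank_euclideanSpace_fin, Real.holderConjugate_iff]
    constructor
    · rw [hNm]; push_cast; linarith
    · rw [hNm]; push_cast; field_simp; ring
  set c := lintegralPowLePowLIntegralFDerivConst (volume : Measure (EucN N)) ((m + 2 : ℝ) / (m + 1))
  refine ⟨c ^ (m + 1) * ((2 * m + 2 : ℕ) : NNReal) ^ (m + 2), fun φ hφ hc => ?_⟩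
  have hφc : Continuous φ := hφ.continuous
  have hdc : Continuous (fderiv ℝ φ) := hφ.continuous_fderiv (by simp)
  have h1 := lintegral_pow_le_pow_lintegral_fderiv (volume : Measure (EucN N))
    (u := fun x => φ x ^ (2 * m + 2)) ((hφ.pow _).of_le (by norm_cast))
    (hc.comp_left (g := fun y : ℝ => y ^ (2 * m + 2)) (by simp)) hp
  have e1 : ∀ x, ‖φ x ^ (2 * m + 2)‖ₑ ^ ((m + 2 : ℝ) / (m + 1)) = ‖φ x‖ₑ ^ (2 * N) := by
    intro x
    rw [enorm_pow, ← ENNReal.rpow_natCast, ← ENNReal.rpow_mul, ← ENNReal.rpow_natCast]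
    congr 1
    rw [hNm]; push_cast; field_simp
  have e2 : ∀ x, ‖fderiv ℝ (fun x => φ x ^ (2 * m + 2)) x‖ₑ =
      ((2 * m + 2 : ℕ) : ℝ≥0∞) * (‖fderiv ℝ φ x‖ₑ * ‖φ x‖ₑ * ‖φ x‖ₑ ^ (2 * m)) := by
    intro x
    have hd : HasFDerivAt φ (fderiv ℝ φ x) x :=
      (hφ.differentiable (by simp) x).hasFDerivAt
    rw [(hd.pow (2 * m + 2)).fderiv]
    have : 2 * m + 2 - 1 = 2 * m + 1 := by omega
    rw [this, enorm_smul, nsmul_eq_mul, enorm_mul, enorm_pow, Real.enorm_natCast]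
    ring
  have h2 : ∫⁻ x, ‖fderiv ℝ φ x‖ₑ * ‖φ x‖ₑ * ‖φ x‖ₑ ^ (2 * m) ≤
      (∫⁻ x, ‖fderiv ℝ φ x‖ₑ ^ N) ^ (1 / (m + 2) : ℝ) *
      (∫⁻ x, ‖φ x‖ₑ ^ N) ^ (1 / (m + 2) : ℝ) * (∫⁻ x, ‖φ x‖ₑ ^ (2 * N)) ^ (m / (m + 2) : ℝ) := by
    have := ENNReal.lintegral_prod_norm_pow_le (μ := (volume : Measure (EucN N)))
      (Finset.univ : Finset (Fin 3))
      (f := ![fun x => ‖fderiv ℝ φ x‖ₑ ^ N, fun x => ‖φ x‖ₑ ^ N, fun x => ‖φ x‖ₑ ^ (2 * N)])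
      (by
        intro i _
        fin_cases i
        · exact ((hdc.enorm.measurable.pow_const _)).aemeasurable
        · exact ((hφc.enorm.measurable.pow_const _)).aemeasurable
        · exact ((hφc.enorm.measurable.pow_const _)).aemeasurable)
      (p := ![(1 / (m + 2) : ℝ), 1 / (m + 2), m / (m + 2)])
      (by simp [Fin.sum_univ_three]; field_simp; ring)
      (by
        intro i _
        fin_cases i <;> simp <;> positivity)
    simp only [Fin.prod_univ_three, Matrix.cons_val_zero, Matrix.cons_val_one, Matrix.cons_val] at this
    refine le_trans (le_of_eq (lintegral_congr fun x => ?_)) this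
    simp only [← ENNReal.rpow_natCast, ← ENNReal.rpow_mul]
    have a1 : ((N : ℕ) : ℝ) * (1 / (m + 2)) = 1 := by rw [hNm]; push_cast; field_simp
    have a2 : ((2 * N : ℕ) : ℝ) * (m / (m + 2)) = ((2 * m : ℕ) : ℝ) := by
      rw [hNm]; push_cast; field_simp
    rw [a1, a2, ENNReal.rpow_one, ENNReal.rpow_one]
  simp only [e1, e2] at h1
  rw [lintegral_const_mul' _ _ (by finiteness)] at h1
  set B := ∫⁻ x, ‖φ x‖ₑ ^ (2 * N)
  set A := ∫⁻ x, ‖φ x‖ₑ ^ N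
  set G := ∫⁻ x, ‖fderiv ℝ φ x‖ₑ ^ N
  have s1 : N - 1 = m + 1 := by omega
  have s2 : N - 2 = m := by omega
  rw [s1, s2]
  have h3 := h1.trans (mul_le_mul_right (ENNReal.rpow_le_rpow (mul_le_mul_right h2 _) (by positivity)) _)
  have h4 := pow_le_pow_left₀ (by positivity) h3 (m + 1)
  refine h4.trans (le_of_eq ?_)
  rw [mul_pow, ← ENNReal.rpow_mul_natCast]
  have : (m + 2 : ℝ) / (m + 1) * ((m + 1 : ℕ) : ℝ) = ((m + 2 : ℕ) : ℝ) := by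
    push_cast; field_simp
  rw [this, ENNReal.rpow_natCast]
  simp only [mul_pow, ← ENNReal.rpow_mul_natCast]
  have a1 : (1 / (m + 2) : ℝ) * ((m + 2 : ℕ) : ℝ)  = 1 := by push_cast; field_simp
  have a2 : (m / (m + 2) : ℝ) * ((m + 2 : ℕ) : ℝ)  = m := by push_cast; field_simp
  rw [a1, a2, ENNReal.rpow_one, ENNReal.rpow_one, ENNReal.rpow_natCast]
  push_cast
  ring

theorem statement3 (N : ℕ) (hN : 1 < N) :
    ∃ C > (0 : ℝ), ∀ E : Set (EucN N), MeasurableSet E → volume E < ⊤ →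
      ∀ φ : EucN N → ℝ, ContDiff ℝ (⊤ : ℕ∞) φ → HasCompactSupport φ →
        ∀ ε > (0 : ℝ),
          (∫ x in E, |φ x| ^ (N : ℝ)) ≤
            (C / ε) * (volume E).toReal * (∫ x, ‖gradient φ x‖ ^ (N : ℝ))
              + C * ε * ∫ x, |φ x| ^ (N : ℝ) := by
  obtain ⟨K, hK⟩ := lady_aux N hN
  refine ⟨K + 1, by positivity, fun E hE hEf φ hφ hc ε hε => ?_⟩
  have hφc : Continuous φ := hφ.continuous
  have hdc : Continuous (fderiv ℝ φ) := hφ.continuous_fderiv (by simp)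
  have hg : ∀ x, ‖gradient φ x‖ = ‖fderiv ℝ φ x‖ := fun x => by simp [gradient]
  simp only [hg, Real.rpow_natCast]
  have hN0 : N ≠ 0 := by omega
  have cpt : ∀ n : ℕ, n ≠ 0 → Integrable (fun x => |φ x| ^ n) := fun n hn =>
    (hφc.abs.pow n).integrable_of_hasCompactSupport
      (hc.comp_left (g := fun y : ℝ => |y| ^ n) (by simp [hn]))
  have iA := cpt N hN0
  have iB := cpt (2 * N) (by omega)
  have iG : Integrable (fun x => ‖fderiv ℝ φ x‖ ^ N) :=
    (hdc.norm.pow N).integrable_of_hasCompactSupport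
      ((hc.fderiv ℝ).comp_left (g := fun y => ‖y‖ ^ N) (by simp [hN0]))
  have conv : ∀ n : ℕ, n ≠ 0 → ∫⁻ x, ‖φ x‖ₑ ^ n = ENNReal.ofReal (∫ x, |φ x| ^ n) := fun n hn => by
    rw [ofReal_integral_eq_lintegral_ofReal (cpt n hn) (Eventually.of_forall fun x => by positivity)]
    refine lintegral_congr fun x => ?_
    rw [ENNReal.ofReal_pow (abs_nonneg _), ← Real.norm_eq_abs, ofReal_norm]
  have convG : ∫⁻ x, ‖fderiv ℝ φ x‖ₑ ^ N = ENNReal.ofReal (∫ x, ‖fderiv ℝ φ x‖ ^ N) := by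
    rw [ofReal_integral_eq_lintegral_ofReal iG (Eventually.of_forall fun x => by positivity)]
    refine lintegral_congr fun x => ?_
    rw [ENNReal.ofReal_pow (norm_nonneg _), ofReal_norm]
  have h := hK φ hφ hc
  rw [conv _ hN0, conv _ (by omega : 2 * N ≠ 0), convG] at h
  have hA0 : 0 ≤ ∫ x, |φ x| ^ N := integral_nonneg fun x => by positivity
  have hB0 : 0 ≤ ∫ x, |φ x| ^ (2 * N) := integral_nonneg fun x => by positivity
  have hG0 : 0 ≤ ∫ x, ‖fderiv ℝ φ x‖ ^ N := integral_nonneg fun x => by positivity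
  have hX : 0 ≤ ∫ x in E, |φ x| ^ N := integral_nonneg fun x => by positivity
  have hcs : (∫ x in E, |φ x| ^ N) ^ 2 ≤ (volume E).toReal * ∫ x, |φ x| ^ (2 * N) := by
    have hq : ∀ t : ℝ, 0 ≤ (volume E).toReal * (t * t) + (-2 * ∫ x in E, |φ x| ^ N) * t +
        ∫ x, |φ x| ^ (2 * N) := by
      intro t
      have i1 : IntegrableOn (fun x => |φ x| ^ (2 * N)) E := iB.integrableOn
      have i2 : IntegrableOn (fun x => 2 * t * |φ x| ^ N) E := (iA.const_mul _).integrableOn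
      have i3 : IntegrableOn (fun _ : EucN N => t ^ 2) E := integrableOn_const hEf.ne
      have : 0 ≤ ∫ x in E, (|φ x| ^ (2 * N) - 2 * t * |φ x| ^ N + t ^ 2) :=
        integral_nonneg fun x => by
          have := sq_nonneg (|φ x| ^ N - t)
          simp only [Pi.zero_apply, mul_comm 2 N, pow_mul]
          linarith
      have i12 : IntegrableOn (fun x => |φ x| ^ (2 * N) - 2 * t * |φ x| ^ N) E := i1.sub i2
      rw [integral_add i12 i3, integral_sub i1 i2, integral_const_mul,
        setIntegral_const] at this
      have h5 : ∫ x in E, |φ x| ^ (2 * N) ≤ ∫ x, |φ x| ^ (2 * N) :=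
        setIntegral_le_integral iB (Eventually.of_forall fun x => by positivity)
      simp only [smul_eq_mul, Measure.real] at this
      nlinarith
    have := discrim_le_zero hq
    unfold discrim at this
    nlinarith
  generalize (∫ x, |φ x| ^ N) = A at *
  generalize (∫ x, |φ x| ^ (2 * N)) = B at *
  generalize (∫ x, ‖fderiv ℝ φ x‖ ^ N) = G at *
  generalize (∫ x in E, |φ x| ^ N) = X at *
  have hv : 0 ≤ (volume E).toReal := ENNReal.toReal_nonneg
  generalize (volume E).toReal = v at *
  have hBK : B ≤ K * (G * A) := by
    rw [← ENNReal.ofReal_pow hB0, ← ENNReal.ofReal_pow hB0, ← ENNReal.ofReal_mul hG0,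
      ← ENNReal.ofReal_mul (by positivity), ← ENNReal.ofReal_coe_nnreal,
      ← ENNReal.ofReal_mul (by positivity), ENNReal.ofReal_le_ofReal_iff (by positivity)] at h
    rcases hB0.eq_or_lt with h0 | h0
    · rw [← h0]; positivity
    · have e : N - 1 = (N - 2) + 1 := by omega
      rw [e, pow_succ] at h
      have : 0 < B ^ (N - 2) := by positivity
      nlinarith
  have hK0 : (0:ℝ) ≤ K := K.2
  have hC : (K : ℝ) ≤ (K + 1) ^ 2 := by nlinarith
  have e : ((K : ℝ) + 1) / ε * v * G + (K + 1) * ε * A = (K + 1) * (v * G / ε + ε * A) := by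
    field_simp
  rw [e]
  refine le_of_sq_le_sq ?_ (by positivity)
  calc X ^ 2 ≤ v * B := hcs
    _ ≤ v * (K * (G * A)) := by gcongr
    _ ≤ v * ((K + 1) ^ 2 * (G * A)) := by gcongr
    _ = (K + 1) ^ 2 * ((v * G / ε) * (ε * A)) := by field_simp
    _ ≤ (K + 1) ^ 2 * (v * G / ε + ε * A) ^ 2 := by
      gcongr
      have h1 : 0 ≤ v * G / ε := by positivity
      have h2 : 0 ≤ ε * A := by positivity
      nlinarith [mul_nonneg h1 h2]
    _ = _ := by ring

end
end

section
/- Let p > N and let E ⊆ ℝ^N be a measurable set with finite Lebesgue measure. Then there exists a constant C = C(N,p) > 0 such that for every φ ∈ C_c^∞(ℝ^N) and every ε > 0 one has ∫_E |φ|^p dx ≤ (C/ε^{(p−N)/N}) |E|^{p/N} ∫_{ℝ^N} |∇φ|^p dx + C ε ∫_{ℝ^N} |φ|^p dx. -/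
open MeasureTheory Filter Topology Metric Set ENNReal
open scoped RealInnerProductSpace

noncomputable section

theorem aux_ball {N : ℕ} {p q : ℝ} (hpq : p.HolderConjugate q)
    (g : EucN N → ℝ≥0∞) (hg : Measurable g) (x : EucN N) {s : ℝ} (hs : 0 < s) :
    ∫⁻ y in ball (0 : EucN N) 1, g (x + s • y) ≤
      volume (ball (0 : EucN N) 1) ^ (1 / q) *
        (ENNReal.ofReal (s ^ (-(N / p) : ℝ)) * (∫⁻ y, g y ^ p) ^ (1 / p)) := by
  have hp0 : 0 < p := hpq.pos
  have hm : Measurable fun y : EucN N => g (x + s • y) := hg.comp (by fun_prop)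
  have h1 := ENNReal.lintegral_mul_le_Lp_mul_Lq (volume.restrict (ball (0 : EucN N) 1)) hpq
    (f := fun y => g (x + s • y)) (g := fun _ => 1) hm.aemeasurable aemeasurable_const
  simp only [Pi.mul_apply, mul_one, ENNReal.one_rpow, lintegral_const, one_mul,
    Measure.restrict_apply MeasurableSet.univ, univ_inter] at h1
  refine h1.trans ?_
  rw [mul_comm]
  gcongr
  have h2 : ∫⁻ y : EucN N, g (x + s • y) ^ p = ENNReal.ofReal (s ^ (-(N : ℝ))) * ∫⁻ y, g y ^ p := by
    have h3 : ∫⁻ y : EucN N, g (x + s • y) ^ p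
        = ∫⁻ z, g (x + z) ^ p ∂(Measure.map (fun y : EucN N => s • y) volume) := by
      have hm2 : Measurable fun z : EucN N => g (x + z) ^ p :=
        (hg.comp (measurable_const_add x)).pow_const p
      rw [lintegral_map hm2 (measurable_const_smul s)]
    rw [h3, Measure.map_addHaar_smul volume hs.ne', lintegral_smul_measure,
      lintegral_add_left_eq_self (fun z => g z ^ p) x]
    simp only [finrank_euclideanSpace, Fintype.card_fin, smul_eq_mul]
    rw [abs_of_pos (by positivity), Real.rpow_neg hs.le, Real.rpow_natCast]
  calc (∫⁻ y in ball (0 : EucN N) 1, g (x + s • y) ^ p) ^ (1 / p)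
      ≤ (∫⁻ y : EucN N, g (x + s • y) ^ p) ^ (1 / p) := by
        gcongr
        exact Measure.restrict_le_self
    _ = _ := by
        rw [h2, ENNReal.mul_rpow_of_nonneg _ _ (by positivity),
          ENNReal.ofReal_rpow_of_nonneg (by positivity) (by positivity), ← Real.rpow_mul hs.le]
        congr 4
        ring

theorem aux_ray {N : ℕ} (φ : EucN N → ℝ) (hφ : ContDiff ℝ (⊤ : ℕ∞) φ) (x y : EucN N)
    (hy : ‖y‖ ≤ 1) {r : ℝ} (hr : 0 < r) :
    ‖φ x‖ₑ ≤ ‖φ (x + r • y)‖ₑ + ∫⁻ s in Ioc 0 r, ‖fderiv ℝ φ (x + s • y)‖ₑ := by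
  have hc : Continuous (fderiv ℝ φ) := hφ.continuous_fderiv (by simp)
  have hd : ∀ s : ℝ, HasDerivAt (fun s : ℝ => φ (x + s • y)) (fderiv ℝ φ (x + s • y) y) s := by
    intro s
    have h1 : HasDerivAt (fun s : ℝ => x + s • y) y s := by
      simpa using ((hasDerivAt_id s).smul_const y).const_add x
    exact ((hφ.differentiable (by simp)) _).hasFDerivAt.comp_hasDerivAt s h1
  have hi := intervalIntegral.integral_eq_sub_of_hasDerivAt (a := 0) (b := r)
    (fun s _ => hd s) (Continuous.intervalIntegrable (by fun_prop) _ _)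
  rw [zero_smul, add_zero, intervalIntegral.integral_of_le hr.le] at hi
  have h2 : φ x = φ (x + r • y) - ∫ s in Ioc 0 r, fderiv ℝ φ (x + s • y) y := by
    rw [hi]; ring
  rw [h2]
  refine (enorm_sub_le).trans ?_
  gcongr
  refine (enorm_integral_le_lintegral_enorm _).trans ?_
  refine lintegral_mono fun s => ?_
  rw [← ofReal_norm, ← ofReal_norm]
  apply ENNReal.ofReal_le_ofReal
  refine ((fderiv ℝ φ (x + s • y)).le_opNorm y).trans ?_
  exact mul_le_of_le_one_right (norm_nonneg _) hy

theorem aux_pow {a r : ℝ} (ha : a < 1) (hr : 0 < r) :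
    ∫⁻ s in Ioc 0 r, ENNReal.ofReal (s ^ (-a)) = ENNReal.ofReal (r ^ (1 - a) / (1 - a)) := by
  have h1 : IntervalIntegrable (fun s : ℝ => s ^ (-a)) volume 0 r :=
    intervalIntegral.intervalIntegrable_rpow' (by linarith)
  rw [intervalIntegrable_iff_integrableOn_Ioc_of_le hr.le] at h1
  rw [← ofReal_integral_eq_lintegral_ofReal h1]
  · rw [← intervalIntegral.integral_of_le hr.le, integral_rpow (Or.inl (by linarith))]
    rw [Real.zero_rpow (by linarith), sub_zero, neg_add_eq_sub]
  · filter_upwards [ae_restrict_mem measurableSet_Ioc] with s hs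
    exact Real.rpow_nonneg hs.1.le _

theorem aux_int {N : ℕ} {F : Type*} [NormedAddCommGroup F] (f : EucN N → F)
    (hf : Continuous f) (hc : HasCompactSupport f) {p : ℝ} (hp : 0 < p) :
    Integrable (fun x => ‖f x‖ ^ p) ∧
    ∫⁻ x, ‖f x‖ₑ ^ p = ENNReal.ofReal (∫ x, ‖f x‖ ^ p) := by
  have h1 : Integrable (fun x => ‖f x‖ ^ p) := by
    refine Continuous.integrable_of_hasCompactSupport
      (hf.norm.rpow_const fun _ => Or.inr hp.le) ?_
    exact hc.comp_left (g := fun z => ‖z‖ ^ p) (by simp [Real.zero_rpow hp.ne'])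
  refine ⟨h1, ?_⟩
  rw [ofReal_integral_eq_lintegral_ofReal h1 (Eventually.of_forall fun x => by positivity)]
  refine lintegral_congr fun x => ?_
  rw [← ofReal_norm, ENNReal.ofReal_rpow_of_nonneg (norm_nonneg _) hp.le]

/-- Morrey-type pointwise bound. -/
theorem aux_morrey {N : ℕ} {p : ℝ} (hp1 : 1 < p) (hpN : (N : ℝ) < p) :
    ∃ w > (0 : ℝ), ∀ φ : EucN N → ℝ, ContDiff ℝ (⊤ : ℕ∞) φ → HasCompactSupport φ →
      ∀ x, ∀ r > (0 : ℝ), |φ x| ≤ w * (r ^ (-(N / p) : ℝ) * (∫ x, ‖φ x‖ ^ p) ^ (1 / p) +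
        r ^ (1 - N / p : ℝ) / (1 - N / p) * (∫ x, ‖fderiv ℝ φ x‖ ^ p) ^ (1 / p)) := by
  have hp0 : 0 < p := by linarith
  have hpq := Real.HolderConjugate.conjExponent hp1
  set q := p.conjExponent
  set ω := volume (ball (0 : EucN N) 1) with hω
  have hω0 : 0 < ω := measure_ball_pos _ _ one_pos
  have hωt : ω ≠ ⊤ := measure_ball_lt_top.ne
  have hq0 : 0 < q := hpq.symm.pos
  have hωr : 0 < ω.toReal := ENNReal.toReal_pos hω0.ne' hωt
  have ha : (N : ℝ) / p < 1 := by rwa [div_lt_one hp0]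
  refine ⟨ω.toReal⁻¹ * ω.toReal ^ (1 / q), by positivity, ?_⟩
  intro φ hφ hcs x r hr
  have hc : Continuous (fderiv ℝ φ) := hφ.continuous_fderiv (by simp)
  obtain ⟨-, e1⟩ := aux_int φ hφ.continuous hcs hp0
  obtain ⟨-, e2⟩ := aux_int (fderiv ℝ φ) hc (hcs.fderiv ℝ) hp0
  set P := ∫ x, ‖φ x‖ ^ p
  set G := ∫ x, ‖fderiv ℝ φ x‖ ^ p
  have hP : 0 ≤ P := integral_nonneg fun x => by positivity
  have hG : 0 ≤ G := integral_nonneg fun x => by positivity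
  have main : ω * ‖φ x‖ₑ ≤ ω ^ (1 / q) * (ENNReal.ofReal (r ^ (-(N / p) : ℝ)) *
      ENNReal.ofReal P ^ (1 / p)) + ω ^ (1 / q) * (ENNReal.ofReal (r ^ (1 - N / p : ℝ) / (1 - N / p))
       * ENNReal.ofReal G ^ (1 / p)) := by
    calc ω * ‖φ x‖ₑ = ∫⁻ y in ball (0 : EucN N) 1, ‖φ x‖ₑ := by
          rw [setLIntegral_const, mul_comm]
      _ ≤ ∫⁻ y in ball (0 : EucN N) 1, (‖φ (x + r • y)‖ₑ +
            ∫⁻ s in Ioc 0 r, ‖fderiv ℝ φ (x + s • y)‖ₑ) := by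
          refine setLIntegral_mono' measurableSet_ball fun y hy => ?_
          exact aux_ray φ hφ x y (by simpa using (mem_ball_zero_iff.1 hy).le) hr
      _ = (∫⁻ y in ball (0 : EucN N) 1, ‖φ (x + r • y)‖ₑ) +
            ∫⁻ y in ball (0 : EucN N) 1, ∫⁻ s in Ioc 0 r, ‖fderiv ℝ φ (x + s • y)‖ₑ := by
          refine lintegral_add_left ?_ _
          exact Continuous.measurable (by have := hφ.continuous; fun_prop)
      _ = (∫⁻ y in ball (0 : EucN N) 1, ‖φ (x + r • y)‖ₑ) +
            ∫⁻ s in Ioc 0 r, ∫⁻ y in ball (0 : EucN N) 1, ‖fderiv ℝ φ (x + s • y)‖ₑ := by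
          rw [lintegral_lintegral_swap]
          refine Measurable.aemeasurable (Continuous.measurable ?_)
          simp only [Function.uncurry_def]
          fun_prop
      _ ≤ _ := by
          gcongr
          · rw [← e1]
            exact aux_ball hpq (fun z => ‖φ z‖ₑ) hφ.continuous.enorm.measurable x hr
          · rw [← e2, ← aux_pow ha hr, ← lintegral_mul_const _ (by fun_prop),
              ← lintegral_const_mul _ (by fun_prop)]
            refine setLIntegral_mono' measurableSet_Ioc fun s hs => ?_
            exact aux_ball hpq (fun z => ‖fderiv ℝ φ z‖ₑ) hc.enorm.measurable x hs.1
  have ha' : 0 < 1 - (N : ℝ) / p := by linarith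
  rw [← mul_add] at main
  have h5 := ENNReal.toReal_mono (by
    refine ENNReal.mul_ne_top (ENNReal.rpow_ne_top_of_nonneg (by positivity) hωt)
      (ENNReal.add_ne_top.2 ⟨?_, ?_⟩) <;>
    exact ENNReal.mul_ne_top ofReal_ne_top
      (ENNReal.rpow_ne_top_of_nonneg (by positivity) ofReal_ne_top)) main
  rw [ENNReal.toReal_mul, ENNReal.toReal_mul, ENNReal.toReal_add, ENNReal.toReal_mul,
    ENNReal.toReal_mul, ← ENNReal.toReal_rpow, ← ENNReal.toReal_rpow, ← ENNReal.toReal_rpow,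
    ENNReal.toReal_ofReal hP, ENNReal.toReal_ofReal hG, ENNReal.toReal_ofReal (by positivity),
    ENNReal.toReal_ofReal (by positivity), toReal_enorm, Real.norm_eq_abs] at h5
  · rw [mul_assoc, le_inv_mul_iff₀ hωr]
    exact h5
  all_goals
    exact ENNReal.mul_ne_top ofReal_ne_top
      (ENNReal.rpow_ne_top_of_nonneg (by positivity) ofReal_ne_top)

theorem aux_morrey_pow {N : ℕ} {p : ℝ} (hp1 : 1 < p) (hpN : (N : ℝ) < p) :
    ∃ C > (0 : ℝ), ∀ φ : EucN N → ℝ, ContDiff ℝ (⊤ : ℕ∞) φ → HasCompactSupport φ →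
      ∀ x, ∀ r > (0 : ℝ), |φ x| ^ p ≤ C * (r ^ (-N : ℝ) * (∫ x, ‖φ x‖ ^ p) +
        r ^ (p - N : ℝ) * (∫ x, ‖fderiv ℝ φ x‖ ^ p)) := by
  obtain ⟨w, hw, h⟩ := aux_morrey hp1 hpN
  have hp0 : 0 < p := by linarith
  have ha : 0 < 1 - (N : ℝ) / p := by rw [sub_pos, div_lt_one hp0]; exact hpN
  set k := (1 - (N : ℝ) / p)⁻¹ with hk
  have hk0 : 0 < k := by positivity
  refine ⟨w ^ p * (2 ^ (p - 1) * (1 + k ^ p)), by positivity, ?_⟩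
  intro φ hφ hcs x r hr
  have h1 := h φ hφ hcs x r hr
  set P := ∫ x, ‖φ x‖ ^ p
  set G := ∫ x, ‖fderiv ℝ φ x‖ ^ p
  have hP : 0 ≤ P := integral_nonneg fun x => by positivity
  have hG : 0 ≤ G := integral_nonneg fun x => by positivity
  have h2 := Real.rpow_le_rpow (abs_nonneg _) h1 hp0.le
  refine h2.trans ?_
  rw [Real.mul_rpow hw.le (by positivity), mul_assoc]
  gcongr
  set A := r ^ (-(N / p) : ℝ) * P ^ (1 / p) with hA
  set B := r ^ (1 - N / p : ℝ) / (1 - N / p) * G ^ (1 / p) with hB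
  have hA0 : 0 ≤ A := by positivity
  have hB0 : 0 ≤ B := by positivity
  have hAp : A ^ p = r ^ (-N : ℝ) * P := by
    rw [hA, Real.mul_rpow (by positivity) (by positivity), ← Real.rpow_mul hr.le,
      ← Real.rpow_mul hP, one_div, inv_mul_cancel₀ hp0.ne', Real.rpow_one]
    congr 2
    field_simp
  have hBp : B ^ p = k ^ p * (r ^ (p - N : ℝ) * G) := by
    rw [hB, div_eq_mul_inv, Real.mul_rpow (by positivity) (by positivity),
      Real.mul_rpow (by positivity) (by positivity), ← Real.rpow_mul hr.le,
      ← Real.rpow_mul hG, one_div, inv_mul_cancel₀ hp0.ne', Real.rpow_one]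
    rw [show (1 - N / p) * p = p - N by field_simp]
    ring
  have h3 : (A + B) ^ p ≤ 2 ^ (p - 1) * (A ^ p + B ^ p) := by
    have := NNReal.rpow_add_le_mul_rpow_add_rpow ⟨A, hA0⟩ ⟨B, hB0⟩ hp1.le
    exact_mod_cast this
  refine h3.trans ?_
  rw [hAp, hBp, mul_assoc]
  gcongr
  have u1 : 0 ≤ r ^ (-N : ℝ) * P := by positivity
  have u2 : 0 ≤ r ^ (p - N : ℝ) * G := by positivity
  have u3 : 0 ≤ k ^ p := by positivity
  nlinarith [mul_nonneg u3 u1]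

theorem statement4 (N : ℕ) (hN : 0 < N) (p : ℝ) (hp1 : 1 < p) (hpN : (N : ℝ) < p) :
    ∃ C > (0 : ℝ), ∀ E : Set (EucN N), MeasurableSet E → volume E < ⊤ →
      ∀ φ : EucN N → ℝ, ContDiff ℝ (⊤ : ℕ∞) φ → HasCompactSupport φ →
        ∀ ε > (0 : ℝ),
          (∫ x in E, |φ x| ^ p) ≤
            (C / ε ^ ((p - N) / N)) * (volume E).toReal ^ (p / N) *
                (∫ x, ‖gradient φ x‖ ^ p)
              + C * ε * ∫ x, |φ x| ^ p := by
  obtain ⟨C, hC, h⟩ := aux_morrey_pow hp1 hpN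
  refine ⟨C, hC, ?_⟩
  intro E hE hEt φ hφ hcs ε hε
  have hp0 : 0 < p := by linarith
  have hN' : (0 : ℝ) < N := by exact_mod_cast hN
  have hgr : ∀ x, ‖gradient φ x‖ = ‖fderiv ℝ φ x‖ := by
    intro x
    simp [gradient]
  simp only [hgr, ← Real.norm_eq_abs] at h ⊢
  have h := h φ hφ hcs
  have hint := (aux_int φ hφ.continuous hcs hp0).1
  set P := ∫ x, ‖φ x‖ ^ p
  set G := ∫ x, ‖fderiv ℝ φ x‖ ^ p
  have hP : 0 ≤ P := integral_nonneg fun x => by positivity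
  have hG : 0 ≤ G := integral_nonneg fun x => by positivity
  rcases eq_or_ne (volume E) 0 with h0 | h0
  · rw [setIntegral_measure_zero _ h0]
    positivity
  set m := (volume E).toReal with hm
  have hm0 : 0 < m := ENNReal.toReal_pos h0 hEt.ne
  set r := (m / ε) ^ (1 / N : ℝ) with hr
  have hr0 : 0 < r := by positivity
  have h1 : ∫ x in E, ‖φ x‖ ^ p ≤ ∫ x in E, C * (r ^ (-N : ℝ) * P + r ^ (p - N : ℝ) * G) := by
    refine setIntegral_mono hint.integrableOn ?_ fun x => h x r hr0
    exact integrableOn_const hEt.ne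
  refine h1.trans (le_of_eq ?_)
  rw [setIntegral_const, smul_eq_mul, measureReal_def, ← hm]
  have e1 : m * r ^ (-N : ℝ) = ε := by
    rw [hr, ← Real.rpow_mul (by positivity),
      show (1 / N : ℝ) * (-N) = -1 by field_simp, Real.rpow_neg_one]
    field_simp
  have e2 : m * r ^ (p - N : ℝ) = m ^ (p / N) / ε ^ ((p - N) / N) := by
    rw [hr, ← Real.rpow_mul (by positivity),
      show (1 / N : ℝ) * (p - N) = (p - N) / N by ring, Real.div_rpow hm0.le hε.le,
      ← mul_div_assoc]
    congr 1
    rw [← Real.rpow_one_add' hm0.le (by have := sub_pos.2 hpN; positivity)]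
    congr 1
    field_simp
    ring
  calc m * (C * (r ^ (-N : ℝ) * P + r ^ (p - N : ℝ) * G))
      = C * (m * r ^ (-N : ℝ)) * P + C * (m * r ^ (p - N : ℝ)) * G := by ring
    _ = _ := by rw [e1, e2]; ring

end
end
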